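/- Let T > 0, let g satisfy (g1), be regularly oscillating at zero, and satisfy lim_{s→0⁺} g(s)/s = 0 and limsup_{s→+∞} g(s)/s < +∞. Let a ∈ L¹([0,T]) satisfy (a1) and (a2), and set g_∞ := liminf_{s→+∞} g(s)/s. Assume that for at least one index i ∈ {1,…,m} there exist λ with 0 < λ < g_∞ and a C¹ function φ : Iᵢ → ℝ with absolutely continuous derivative, φ > 0 on the interior of Iᵢ, φ = 0 at both endpoints of Iᵢ, and φ'' + λ a(x) φ = 0 a.e. on Iᵢ (i.e., g_∞ > min_i λ₁ⁱ, where λ₁ⁱ is the first eigenvalue of φ'' + λ a(x) φ = 0 with φ = 0 on ∂Iᵢ). Then the equation u'' + a(x) g(u) = 0 has at least one positive solution satisfying the Neumann boundary conditions and at least one positive solution satisfying the periodic boundary conditions. -/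

import Mathlib

open MeasureTheory Set Filter

/-- `u` (with derivative `u'`) is a C¹ solution of `u'' + f(x) = 0` on `[0,T]`:
`u'` is absolutely continuous and the equation holds a.e., expressed via the
integral equation `u'(x) = u'(0) − ∫₀ˣ f(t) dt`. -/
def IsSolOn (T : ℝ) (f : ℝ → ℝ) (u u' : ℝ → ℝ) : Prop :=
  (∀ x ∈ Icc (0:ℝ) T, HasDerivWithinAt u (u' x) (Icc (0:ℝ) T) x) ∧
  ContinuousOn u' (Icc (0:ℝ) T) ∧
  ∀ x ∈ Icc (0:ℝ) T, u' x = u' 0 - ∫ t in (0:ℝ)..x, f t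

/-- The equation `u'' + a(x) g(u) = 0` on `[0,T]` has a positive solution
satisfying the Neumann boundary conditions. -/
def PosSolNeumann (T : ℝ) (a g : ℝ → ℝ) : Prop :=
  ∃ u u' : ℝ → ℝ, IsSolOn T (fun t => a t * g (u t)) u u' ∧
    (∀ x ∈ Icc (0:ℝ) T, 0 < u x) ∧ u' 0 = 0 ∧ u' T = 0

/-- The equation `u'' + a(x) g(u) = 0` on `[0,T]` has a positive solution
satisfying the periodic boundary conditions. -/
def PosSolPeriodic (T : ℝ) (a g : ℝ → ℝ) : Prop :=
  ∃ u u' : ℝ → ℝ, IsSolOn T (fun t => a t * g (u t)) u u' ∧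
    (∀ x ∈ Icc (0:ℝ) T, 0 < u x) ∧ u 0 = u T ∧ u' 0 = u' T

/-- Condition (g1): `g : [0,∞) → [0,∞)` is continuous, `g 0 = 0`, `g > 0` on `(0,∞)`. -/
def CondG1 (g : ℝ → ℝ) : Prop :=
  ContinuousOn g (Ici (0:ℝ)) ∧ (∀ s : ℝ, 0 ≤ s → 0 ≤ g s) ∧ g 0 = 0 ∧
    ∀ s : ℝ, 0 < s → 0 < g s

/-- `g` is regularly oscillating at zero. -/
def RegOscAtZero (g : ℝ → ℝ) : Prop :=
  ∀ ε : ℝ, 0 < ε → ∃ δ > (0:ℝ), ∃ η > (0:ℝ), ∀ s ω : ℝ,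
    0 < s → s < δ → |ω - 1| < η → |g (ω * s) / g s - 1| < ε

/-- `liminf_{s → +∞} g(s)/s`, computed in `EReal`. -/
noncomputable def GrowthLiminf (g : ℝ → ℝ) : EReal :=
  liminf (fun s : ℝ => ((g s / s : ℝ) : EReal)) atTop

/-- `limsup_{s → +∞} g(s)/s`, computed in `EReal`. -/
noncomputable def GrowthLimsup (g : ℝ → ℝ) : EReal :=
  limsup (fun s : ℝ => ((g s / s : ℝ) : EReal)) atTop

/-- `(lam, φ)` is a Dirichlet eigenpair of `φ'' + λ a(x) φ = 0` on `[x₁,x₂]` with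
`φ > 0` in the interior (so `lam` is the first eigenvalue): `φ` is `C¹` with
absolutely continuous derivative, expressed via the integral equation. -/
def DirichletEigenpair (a : ℝ → ℝ) (x₁ x₂ lam : ℝ) : Prop :=
  ∃ φ φ' : ℝ → ℝ,
    (∀ x ∈ Icc x₁ x₂, HasDerivWithinAt φ (φ' x) (Icc x₁ x₂) x) ∧
    ContinuousOn φ' (Icc x₁ x₂) ∧
    (∀ x ∈ Ioo x₁ x₂, 0 < φ x) ∧ φ x₁ = 0 ∧ φ x₂ = 0 ∧
    ∀ x ∈ Icc x₁ x₂, φ' x = φ' x₁ - lam * ∫ t in x₁..x, a t * φ t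

/-!
Extend `g` by zero to the negative half-line. A solution that reaches zero then keeps going down
with constant velocity, so every solution starting above zero and meeting the boundary conditions
is positive.

Shoot in the phase plane. Solutions of initial value problems need not be unique, so the Poincaré
map is set-valued; it is the limit of continuous maps, the Poincaré maps of delayed equations,
which can be integrated explicitly. By regular oscillation and `∫ a < 0`, a small solution with
a critical point gains velocity over `[0, T]`; by Green's identity against the eigenfunction,
a large solution reaches zero and ends with negative velocity. The Neumann solution is found by
intermediate values among the solutions starting at rest; the periodic one is a fixed point of the
Poincaré map in a half annulus, found by following the angle of the displacement along the boundary.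
-/

theorem lt_of_forall_ne_of_isPreconnected {X : Type*} [TopologicalSpace X] {s : Set X}
    (hs : IsPreconnected s) {θ : X → ℝ} (hθ : ContinuousOn θ s) {A : ℝ} (hne : ∀ x ∈ s, θ x ≠ A)
    {x y : X} (hx : x ∈ s) (hy : y ∈ s) (hlt : θ x < A) : θ y < A := by
  by_contra! hle
  obtain ⟨z, hz, hzA⟩ := hs.intermediate_value hx hy hθ ⟨hlt.le, hle⟩
  exact hne z hz hzA

theorem gt_of_forall_ne_of_isPreconnected {X : Type*} [TopologicalSpace X] {s : Set X}
    (hs : IsPreconnected s) {θ : X → ℝ} (hθ : ContinuousOn θ s) {A : ℝ} (hne : ∀ x ∈ s, θ x ≠ A)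
    {x y : X} (hx : x ∈ s) (hy : y ∈ s) (hlt : A < θ x) : A < θ y := by
  by_contra! hle
  obtain ⟨z, hz, hzA⟩ := hs.intermediate_value hy hx hθ ⟨hle, hlt.le⟩
  exact hne z hz hzA

theorem im_ne_pi_of_exp_mem_slitPlane {z : ℂ} (hz : Complex.exp z ∈ Complex.slitPlane) :
    z.im ≠ Real.pi := by
  intro him
  simp [Complex.mem_slitPlane_iff, Complex.exp_re, Complex.exp_im, him,
    (Real.exp_pos z.re).not_gt] at hz

theorem im_ne_zero_of_neg_exp_mem_slitPlane {z : ℂ} (hz : -Complex.exp z ∈ Complex.slitPlane) :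
    z.im ≠ 0 := by
  intro him
  simp [Complex.mem_slitPlane_iff, Complex.exp_re, Complex.exp_im, him,
    (Real.exp_pos z.re).not_gt] at hz

theorem pi_lt_im_of_exp_im_neg {z : ℂ} (hz : (Complex.exp z).im < 0) (h0 : 0 < z.im) :
    Real.pi < z.im := by
  by_contra! hle
  rw [Complex.exp_im] at hz
  exact hz.not_ge (mul_nonneg (Real.exp_pos _).le (Real.sin_nonneg_of_nonneg_of_le_pi h0.le hle))

theorem exists_continuous_exp_eq {X : Type*} [TopologicalSpace X] [SimplyConnectedSpace X]
    [LocallyPathConnectedSpace X] {f : X → ℂ} (hf : Continuous f) (hf0 : ∀ x, f x ≠ 0) (x₀ : X) :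
    ∃ L : X → ℂ, Continuous L ∧ (∀ x, Complex.exp (L x) = f x) ∧ L x₀ = Complex.log (f x₀) := by
  obtain ⟨L, ⟨hL₀, hL⟩, -⟩ := Complex.isCoveringMapOn_exp.existsUnique_continuousMap_lifts
    ⟨f, hf⟩ (Complex.exp_log (hf0 x₀)) hf0
  exact ⟨L, L.continuous, congrFun hL, hL₀⟩

theorem exists_continuousOn_exp_eq_of_rectangle {a b c d : ℝ} (hab : a ≤ b) (hcd : c ≤ d)
    {f : ℝ × ℝ → ℂ} (hf : ContinuousOn f (Icc a b ×ˢ Icc c d))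
    (hf0 : ∀ p ∈ Icc a b ×ˢ Icc c d, f p ≠ 0) {p₀ : ℝ × ℝ} (hp₀ : p₀ ∈ Icc a b ×ˢ Icc c d) :
    ∃ L : ℝ × ℝ → ℂ, ContinuousOn L (Icc a b ×ˢ Icc c d) ∧
      (∀ p ∈ Icc a b ×ˢ Icc c d, Complex.exp (L p) = f p) ∧ L p₀ = Complex.log (f p₀) := by
  let clamp : ℝ × ℝ → ℝ × ℝ := fun p => (projIcc a b hab p.1, projIcc c d hcd p.2)
  have hmem : ∀ p, clamp p ∈ Icc a b ×ˢ Icc c d := fun p => ⟨Subtype.prop _, Subtype.prop _⟩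
  have hclamp : ∀ p ∈ Icc a b ×ˢ Icc c d, clamp p = p := fun p hp =>
    Prod.ext (congrArg Subtype.val (projIcc_of_mem hab hp.1))
      (congrArg Subtype.val (projIcc_of_mem hcd hp.2))
  have hcont : Continuous clamp := by fun_prop
  obtain ⟨L, hL, hexp, hL₀⟩ := exists_continuous_exp_eq (hf.comp_continuous hcont hmem)
    (fun p => hf0 _ (hmem p)) p₀
  refine ⟨L, hL.continuousOn, fun p hp => ?_, ?_⟩
  · rw [hexp, Function.comp_apply, hclamp p hp]
  · rw [hL₀, Function.comp_apply, hclamp p₀ hp₀]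

-- The angle of `f` is followed from the corner `(a, d)` to `(b, c)` along both pairs of edges.
theorem exists_eq_zero_of_rectangle {a b c d : ℝ} (hab : a ≤ b) (hcd : c ≤ d) {f : ℝ × ℝ → ℂ}
    (hf : ContinuousOn f (Icc a b ×ˢ Icc c d))
    (hbottom : ∀ x ∈ Icc a b, (f (x, c)).im < 0)
    (htop : ∀ x ∈ Icc a b, f (x, d) ∈ Complex.slitPlane)
    (hright : ∀ y ∈ Icc c d, f (b, y) ∈ Complex.slitPlane)
    (hleft : ∀ y ∈ Icc c d, -f (a, y) ∈ Complex.slitPlane)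
    (hcorner : 0 < (f (a, d)).im) :
    ∃ p ∈ Icc a b ×ˢ Icc c d, f p = 0 := by
  by_contra! hf0
  have ha : a ∈ Icc a b := left_mem_Icc.2 hab
  have hb : b ∈ Icc a b := right_mem_Icc.2 hab
  have hc : c ∈ Icc c d := left_mem_Icc.2 hcd
  have hd : d ∈ Icc c d := right_mem_Icc.2 hcd
  obtain ⟨L, hL, hexp, hL₀⟩ :=
    exists_continuousOn_exp_eq_of_rectangle hab hcd hf hf0 (mk_mem_prod ha hd)
  have hhor : ∀ y ∈ Icc c d, ContinuousOn (fun x => (L (x, y)).im) (Icc a b) := fun y hy =>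
    Complex.continuous_im.comp_continuousOn (hL.comp (by fun_prop) fun x hx => mk_mem_prod hx hy)
  have hver : ∀ x ∈ Icc a b, ContinuousOn (fun y => (L (x, y)).im) (Icc c d) := fun x hx =>
    Complex.continuous_im.comp_continuousOn (hL.comp (by fun_prop) fun y hy => mk_mem_prod hx hy)
  have had_pos : 0 < (L (a, d)).im := by
    rw [hL₀, Complex.log_im]
    exact (Complex.arg_nonneg_iff.2 hcorner.le).lt_of_ne'
      fun h => hcorner.ne' (Complex.arg_eq_zero_iff.1 h).2
  have had_lt : (L (a, d)).im < Real.pi := by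
    rw [hL₀, Complex.log_im]
    exact (Complex.arg_le_pi _).lt_of_ne fun h => hcorner.ne' (Complex.arg_eq_pi_iff.1 h).2
  have hac_pos : 0 < (L (a, c)).im :=
    gt_of_forall_ne_of_isPreconnected isPreconnected_Icc (hver a ha) (fun y hy =>
      im_ne_zero_of_neg_exp_mem_slitPlane (by rw [hexp _ ⟨ha, hy⟩]; exact hleft y hy)) hd hc had_pos
  have hac : Real.pi < (L (a, c)).im :=
    pi_lt_im_of_exp_im_neg (by rw [hexp _ ⟨ha, hc⟩]; exact hbottom a ha) hac_pos
  have hbc : Real.pi < (L (b, c)).im :=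
    gt_of_forall_ne_of_isPreconnected isPreconnected_Icc (hhor c hc) (fun x hx =>
      im_ne_pi_of_exp_mem_slitPlane (by
        rw [hexp _ ⟨hx, hc⟩]; exact .inr (hbottom x hx).ne))
      ha hb hac
  have hbd : (L (b, d)).im < Real.pi :=
    lt_of_forall_ne_of_isPreconnected isPreconnected_Icc (hhor d hd) (fun x hx =>
      im_ne_pi_of_exp_mem_slitPlane (by rw [hexp _ ⟨hx, hd⟩]; exact htop x hx)) ha hb had_lt
  have hbc' : (L (b, c)).im < Real.pi :=
    lt_of_forall_ne_of_isPreconnected isPreconnected_Icc (hver b hb) (fun y hy =>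
      im_ne_pi_of_exp_mem_slitPlane (by rw [hexp _ ⟨hb, hy⟩]; exact hright y hy)) hd hc hbd
  exact hbc.not_gt hbc'

section Subconvergence

variable {X Y X' Y' : Type*} [TopologicalSpace X] [TopologicalSpace Y] [TopologicalSpace X']
  [TopologicalSpace Y']

/-- The maps `Φ n` subconverge on `K` to the set-valued map `F`: values of `Φ` along indices tending
to infinity, at points of `K` converging in `K`, accumulate at a value of `F` at the limit point.
This is what survives of uniform convergence when initial value problems are approximated without
uniqueness of their solutions. -/
def SubconvergesOn (Φ : ℕ → X → Y) (F : X → Set Y) (K : Set X) : Prop :=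
  ∀ (k : ℕ → ℕ) (x : ℕ → X) (x₀ : X), Tendsto k atTop atTop → (∀ n, x n ∈ K) → x₀ ∈ K →
    Tendsto x atTop (nhds x₀) → ∃ y ∈ F x₀, ∃ s : ℕ → ℕ, StrictMono s ∧
      Tendsto (fun n => Φ (k (s n)) (x (s n))) atTop (nhds y)

namespace SubconvergesOn

variable {Φ : ℕ → X → Y} {F F' : X → Set Y} {K : Set X}

theorem mono_right (h : SubconvergesOn Φ F K) (hF : ∀ x ∈ K, F x ⊆ F' x) :
    SubconvergesOn Φ F' K := by
  intro k x x₀ hk hx hx₀ hlim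
  obtain ⟨y, hy, s, hs, hconv⟩ := h k x x₀ hk hx hx₀ hlim
  exact ⟨y, hF x₀ hx₀ hy, s, hs, hconv⟩

theorem mono_set {K' : Set X} (h : SubconvergesOn Φ F K) (hK : K' ⊆ K) : SubconvergesOn Φ F K' :=
  fun k x x₀ hk hx hx₀ hlim => h k x x₀ hk (fun n => hK (hx n)) (hK hx₀) hlim

theorem comp {κ : X' → X} {K' : Set X'} {ψ : X × Y → Y'} (h : SubconvergesOn Φ F K)
    (hκ : Continuous κ) (hmaps : MapsTo κ K' K) (hψ : Continuous ψ) :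
    SubconvergesOn (fun n p => ψ (κ p, Φ n (κ p))) (fun p => (fun y => ψ (κ p, y)) '' F (κ p))
      K' := by
  intro k x x₀ hk hx hx₀ hlim
  have hκlim : Tendsto (fun n => κ (x n)) atTop (nhds (κ x₀)) := (hκ.tendsto x₀).comp hlim
  obtain ⟨y, hy, s, hs, hconv⟩ := h k _ _ hk (fun n => hmaps (hx n)) (hmaps hx₀) hκlim
  exact ⟨_, mem_image_of_mem _ hy, s, hs,
    (hψ.tendsto _).comp ((hκlim.comp hs.tendsto_atTop).prodMk_nhds hconv)⟩

theorem eventually_mapsTo [FirstCountableTopology X] (h : SubconvergesOn Φ F K)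
    (hK : IsCompact K) {U : Set Y} (hU : IsOpen U) (hF : ∀ x ∈ K, F x ⊆ U) :
    ∀ᶠ n in atTop, MapsTo (Φ n) K U := by
  by_contra hfreq
  obtain ⟨k, hk, hbad⟩ := extraction_of_frequently_atTop (not_eventually.1 hfreq)
  simp only [MapsTo, not_forall] at hbad
  choose x hxK hxU using hbad
  obtain ⟨x₀, hx₀, r, hr, hlim⟩ := hK.isSeqCompact hxK
  obtain ⟨y, hy, s, -, hconv⟩ := h (k ∘ r) (x ∘ r) x₀
    (hk.tendsto_atTop.comp hr.tendsto_atTop) (fun n => hxK _) hx₀ hlim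
  obtain ⟨n, hn⟩ := (hconv.eventually_mem (hU.mem_nhds (hF x₀ hx₀ hy))).exists
  exact hxU _ hn

theorem exists_zero_mem_of_Icc {Φ : ℕ → ℝ → ℝ} {F : ℝ → Set ℝ} {a b : ℝ} (hab : a ≤ b)
    (h : SubconvergesOn Φ F (Icc a b)) (hcont : ∀ n, ContinuousOn (Φ n) (Icc a b))
    (hFa : F a ⊆ Ioi 0) (hFb : F b ⊆ Iio 0) : ∃ r ∈ Icc a b, 0 ∈ F r := by
  by_contra! hF0
  have ha : a ∈ Icc a b := left_mem_Icc.2 hab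
  have hb : b ∈ Icc a b := right_mem_Icc.2 hab
  have hpos := (h.mono_set (singleton_subset_iff.2 ha)).eventually_mapsTo isCompact_singleton
    isOpen_Ioi (by simpa using hFa)
  have hneg := (h.mono_set (singleton_subset_iff.2 hb)).eventually_mapsTo isCompact_singleton
    isOpen_Iio (by simpa using hFb)
  have hne := h.eventually_mapsTo isCompact_Icc isOpen_compl_singleton
    fun r hr => subset_compl_singleton_iff.2 (hF0 r hr)
  obtain ⟨n, hna, hnb, hn⟩ := (hpos.and (hneg.and hne)).exists
  obtain ⟨r, hr, hr0⟩ := intermediate_value_Icc' hab (hcont n) ⟨(hnb rfl).le, (hna rfl).le⟩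
  exact hn hr hr0

theorem exists_zero_mem_of_rectangle {Φ : ℕ → ℝ × ℝ → ℂ} {F : ℝ × ℝ → Set ℂ} {a b c d : ℝ}
    (hab : a ≤ b) (hcd : c ≤ d) (h : SubconvergesOn Φ F (Icc a b ×ˢ Icc c d))
    (hcont : ∀ n, ContinuousOn (Φ n) (Icc a b ×ˢ Icc c d))
    (hbottom : ∀ x ∈ Icc a b, F (x, c) ⊆ {z | z.im < 0})
    (htop : ∀ x ∈ Icc a b, F (x, d) ⊆ Complex.slitPlane)
    (hright : ∀ y ∈ Icc c d, F (b, y) ⊆ Complex.slitPlane)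
    (hleft : ∀ y ∈ Icc c d, ∀ z ∈ F (a, y), -z ∈ Complex.slitPlane)
    (hcorner : F (a, d) ⊆ {z | 0 < z.im}) :
    ∃ p ∈ Icc a b ×ˢ Icc c d, 0 ∈ F p := by
  by_contra! hF0
  have hedge : ∀ s ⊆ Icc a b, ∀ t ⊆ Icc c d, IsCompact s → IsCompact t → ∀ {U : Set ℂ},
      IsOpen U → (∀ x ∈ s, ∀ y ∈ t, F (x, y) ⊆ U) → ∀ᶠ n in atTop, MapsTo (Φ n) (s ×ˢ t) U :=
    fun s hs t ht hsc htc U hU hF => (h.mono_set (prod_mono hs ht)).eventually_mapsTo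
      (hsc.prod htc) hU fun p hp => hF _ hp.1 _ hp.2
  have ha : {a} ⊆ Icc a b := singleton_subset_iff.2 (left_mem_Icc.2 hab)
  have hb : {b} ⊆ Icc a b := singleton_subset_iff.2 (right_mem_Icc.2 hab)
  have hc : {c} ⊆ Icc c d := singleton_subset_iff.2 (left_mem_Icc.2 hcd)
  have hd : {d} ⊆ Icc c d := singleton_subset_iff.2 (right_mem_Icc.2 hcd)
  have hslit : IsOpen Complex.slitPlane := Complex.isOpen_slitPlane
  obtain ⟨n, nbottom, ntop, nright, nleft, ncorner, nne⟩ :=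
    ((hedge _ subset_rfl _ hc isCompact_Icc isCompact_singleton
      (isOpen_lt Complex.continuous_im continuous_const) (by simpa using hbottom)).and <|
    (hedge _ subset_rfl _ hd isCompact_Icc isCompact_singleton hslit (by simpa using htop)).and <|
    (hedge _ hb _ subset_rfl isCompact_singleton isCompact_Icc hslit (by simpa using hright)).and <|
    (hedge _ ha _ subset_rfl isCompact_singleton isCompact_Icc
      (hslit.preimage continuous_neg) (by rintro _ rfl; exact hleft)).and <|
    (hedge _ ha _ hd isCompact_singleton isCompact_singleton
      (isOpen_lt continuous_const Complex.continuous_im) (by simpa using hcorner)).and <|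
    hedge _ subset_rfl _ subset_rfl isCompact_Icc isCompact_Icc isOpen_compl_singleton
      fun x hx y hy => subset_compl_singleton_iff.2 (hF0 _ ⟨hx, hy⟩)).exists
  obtain ⟨p, hp, hp0⟩ := exists_eq_zero_of_rectangle hab hcd (hcont n)
    (fun x hx => nbottom ⟨hx, rfl⟩) (fun x hx => ntop ⟨hx, rfl⟩) (fun y hy => nright ⟨rfl, hy⟩)
    (fun y hy => nleft ⟨rfl, hy⟩) (ncorner ⟨rfl, rfl⟩)
  exact nne hp hp0

end SubconvergesOn

end Subconvergence

theorem comp_absolutelyContinuousOnInterval_of_lipschitzOnWith {f g : ℝ → ℝ} {a b : ℝ}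
    {K : NNReal} {s : Set ℝ} (hg : LipschitzOnWith K g s)
    (hf : AbsolutelyContinuousOnInterval f a b) (hmaps : MapsTo f (uIcc a b) s) :
    AbsolutelyContinuousOnInterval (fun x => g (f x)) a b := by
  refine squeeze_zero' (.of_forall fun E => Finset.sum_nonneg fun i _ => dist_nonneg) ?_
    (by simpa only [mul_zero] using Tendsto.const_mul (K : ℝ) hf)
  filter_upwards [mem_inf_of_right (mem_principal_self _)] with E hE
  rw [Finset.mul_sum]
  exact Finset.sum_le_sum fun i hi =>
    hg.dist_le_mul _ (hmaps (hE.1 i hi).1) _ (hmaps (hE.1 i hi).2)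

theorem exp_comp_absolutelyContinuousOnInterval {f : ℝ → ℝ} {a b : ℝ}
    (hf : AbsolutelyContinuousOnInterval f a b) :
    AbsolutelyContinuousOnInterval (fun x => Real.exp (f x)) a b := by
  obtain ⟨C, hC⟩ := hf.exists_bound
  obtain ⟨K, hK⟩ := (Real.contDiff_exp (n := 1)).contDiffOn.exists_lipschitzOnWith (by decide)
    (convex_Icc (-C) C) isCompact_Icc
  exact comp_absolutelyContinuousOnInterval_of_lipschitzOnWith hK hf fun x hx => abs_le.1 (hC x hx)

theorem le_of_ae_deriv_nonpos {f : ℝ → ℝ} {a b : ℝ} (hab : a ≤ b)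
    (hf : AbsolutelyContinuousOnInterval f a b) (hderiv : ∀ᵐ x, x ∈ Ioo a b → deriv f x ≤ 0) :
    f b ≤ f a := by
  have hint : ∫ x in a..b, deriv f x ≤ 0 := by
    rw [intervalIntegral.integral_of_le hab, integral_Ioc_eq_integral_Ioo]
    exact integral_nonpos_of_ae ((ae_restrict_iff' measurableSet_Ioo).2 hderiv)
  rw [hf.integral_deriv_eq_sub] at hint
  linarith

theorem mul_exp_neg_le_of_ae_deriv_le_mul {N A : ℝ → ℝ} {a b : ℝ} (hab : a ≤ b)
    (hN : AbsolutelyContinuousOnInterval N a b) (hA : AbsolutelyContinuousOnInterval A a b)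
    (hderiv : ∀ᵐ x, x ∈ Ioo a b → deriv N x ≤ deriv A x * N x) :
    N b * Real.exp (-A b) ≤ N a * Real.exp (-A a) := by
  refine le_of_ae_deriv_nonpos (f := fun x => N x * Real.exp (-A x)) hab
    (hN.fun_mul (exp_comp_absolutelyContinuousOnInterval hA.neg)) ?_
  filter_upwards [hderiv, hN.ae_differentiableAt, hA.ae_differentiableAt] with x hx hNx hAx hxab
  have hx' : x ∈ uIcc a b := Icc_subset_uIcc (Ioo_subset_Icc_self hxab)
  have hprod := (hNx hx').hasDerivAt.mul (hAx hx').hasDerivAt.neg.exp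
  rw [show deriv (fun x => N x * Real.exp (-A x)) x = _ from hprod.deriv]
  have := mul_nonneg (sub_nonneg.2 (hx hxab)) (Real.exp_pos (-A x)).le
  simp only [Pi.neg_apply]
  linarith

theorem eventually_lt_of_hasDerivWithinAt_neg {f : ℝ → ℝ} {f' x : ℝ} {s : Set ℝ}
    (hf : HasDerivWithinAt f f' s x) (hs : s ∈ nhdsWithin x (Ioi x)) (hf' : f' < 0) :
    ∀ᶠ y in nhdsWithin x (Ioi x), f y < f x := by
  have hslope := (hasDerivWithinAt_iff_tendsto_slope' self_notMem_Ioi).1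
    (hf.mono_of_mem_nhdsWithin hs)
  filter_upwards [hslope.eventually_lt_const hf', self_mem_nhdsWithin] with y hy hxy
  rw [slope_def_field, div_neg_iff] at hy
  have := sub_pos.2 (mem_Ioi.1 hxy)
  rcases hy with hy | hy <;> linarith

theorem eventually_lt_of_hasDerivWithinAt_pos {f : ℝ → ℝ} {f' x : ℝ} {s : Set ℝ}
    (hf : HasDerivWithinAt f f' s x) (hs : s ∈ nhdsWithin x (Iio x)) (hf' : 0 < f') :
    ∀ᶠ y in nhdsWithin x (Iio x), f y < f x := by
  have hslope := (hasDerivWithinAt_iff_tendsto_slope' self_notMem_Iio).1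
    (hf.mono_of_mem_nhdsWithin hs)
  filter_upwards [hslope.eventually_const_lt hf', self_mem_nhdsWithin] with y hy hxy
  rw [slope_def_field, div_pos_iff] at hy
  have := sub_neg.2 (mem_Iio.1 hxy)
  rcases hy with hy | hy <;> linarith

theorem absolutelyContinuousOnInterval_congr {f g : ℝ → ℝ} {a b : ℝ}
    (hf : AbsolutelyContinuousOnInterval f a b) (hfg : EqOn f g (uIcc a b)) :
    AbsolutelyContinuousOnInterval g a b := by
  refine Tendsto.congr' ?_ hf
  filter_upwards [mem_inf_of_right (mem_principal_self _)] with E hE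
  exact Finset.sum_congr rfl fun i hi => by rw [hfg (hE.1 i hi).1, hfg (hE.1 i hi).2]

/-- `u`, with derivative `v`, solves `u'' + f = 0` on `[α, β]` in the sense of Carathéodory, for an
integrable forcing term `f`. -/
structure SolvesOn (α β : ℝ) (f u v : ℝ → ℝ) : Prop where
  hasDerivWithinAt : ∀ t ∈ Icc α β, HasDerivWithinAt u (v t) (Icc α β) t
  continuousOn_velocity : ContinuousOn v (Icc α β)
  integrableOn_forcing : IntegrableOn f (Icc α β)
  velocity_eq : ∀ t ∈ Icc α β, v t = v α - ∫ x in α..t, f x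

theorem intervalIntegrable_of_integrableOn_Icc {f : ℝ → ℝ} {α β s t : ℝ}
    (hf : IntegrableOn f (Icc α β)) (hs : s ∈ Icc α β) (ht : t ∈ Icc α β) :
    IntervalIntegrable f volume s t :=
  (hf.mono_set (uIcc_subset_Icc hs ht)).intervalIntegrable

namespace SolvesOn

variable {α β s t : ℝ} {f u v : ℝ → ℝ}

theorem continuousOn (h : SolvesOn α β f u v) : ContinuousOn u (Icc α β) :=
  fun t ht => (h.hasDerivWithinAt t ht).continuousWithinAt

theorem intervalIntegrable (h : SolvesOn α β f u v) (hs : s ∈ Icc α β) (ht : t ∈ Icc α β) :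
    IntervalIntegrable f volume s t :=
  intervalIntegrable_of_integrableOn_Icc h.integrableOn_forcing hs ht

theorem integral_velocity (h : SolvesOn α β f u v) (hs : s ∈ Icc α β) (ht : t ∈ Icc α β) :
    ∫ x in s..t, v x = u t - u s := by
  have hsub : uIcc s t ⊆ Icc α β := uIcc_subset_Icc hs ht
  refine intervalIntegral.integral_eq_sub_of_hasDeriv_right (h.continuousOn.mono hsub)
    (fun x hx => ?_) ((h.continuousOn_velocity.mono hsub).intervalIntegrable)
  have hx' : x ∈ Icc α β := hsub (Ioo_subset_Icc_self hx)
  exact (h.hasDerivWithinAt x hx').mono_of_mem_nhdsWithin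
    (Icc_mem_nhdsGT_of_mem ⟨hx'.1, hx.2.trans_le (max_le hs.2 ht.2)⟩)

theorem integral_forcing (h : SolvesOn α β f u v) (hs : s ∈ Icc α β) (ht : t ∈ Icc α β) :
    ∫ x in s..t, f x = v s - v t := by
  have hα : α ∈ Icc α β := left_mem_Icc.2 (hs.1.trans hs.2)
  have hadj := intervalIntegral.integral_interval_sub_left (h.intervalIntegrable hα ht)
    (h.intervalIntegrable hα hs)
  rw [h.velocity_eq s hs, h.velocity_eq t ht]
  linarith

theorem mono (h : SolvesOn α β f u v) (hs : s ∈ Icc α β) (ht : t ∈ Icc α β) :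
    SolvesOn s t f u v where
  hasDerivWithinAt x hx := (h.hasDerivWithinAt x (Icc_subset_Icc hs.1 ht.2 hx)).mono
    (Icc_subset_Icc hs.1 ht.2)
  continuousOn_velocity := h.continuousOn_velocity.mono (Icc_subset_Icc hs.1 ht.2)
  integrableOn_forcing := h.integrableOn_forcing.mono_set (Icc_subset_Icc hs.1 ht.2)
  velocity_eq x hx := by
    rw [h.integral_forcing hs (Icc_subset_Icc hs.1 ht.2 hx)]
    ring

theorem congr {f₁ : ℝ → ℝ} (h : SolvesOn α β f u v) (hf : EqOn f f₁ (Icc α β)) :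
    SolvesOn α β f₁ u v where
  hasDerivWithinAt := h.hasDerivWithinAt
  continuousOn_velocity := h.continuousOn_velocity
  integrableOn_forcing := h.integrableOn_forcing.congr_fun hf measurableSet_Icc
  velocity_eq t ht := by
    rw [h.velocity_eq t ht]
    congr 1
    exact intervalIntegral.integral_congr
      (hf.mono (uIcc_subset_Icc (left_mem_Icc.2 (ht.1.trans ht.2)) ht))

theorem of_integral_eq (hf : IntegrableOn f (Icc α β))
    (hu : ∀ t ∈ Icc α β, u t = u α + ∫ x in α..t, v x)
    (hv : ∀ t ∈ Icc α β, v t = v α - ∫ x in α..t, f x) : SolvesOn α β f u v := by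
  have hcont : ContinuousOn v (Icc α β) := by
    rcases lt_or_ge β α with hαβ | hαβ
    · simp [Icc_eq_empty hαβ.not_ge]
    rw [← uIcc_of_le hαβ] at hf hv ⊢
    exact (continuousOn_const.sub (intervalIntegral.continuousOn_primitive_interval hf)).congr hv
  refine ⟨fun t ht => ?_, hcont, hf, hv⟩
  have : Fact (t ∈ Icc α β) := ⟨ht⟩
  have hsub : uIcc α t ⊆ Icc α β := uIcc_subset_Icc (left_mem_Icc.2 (ht.1.trans ht.2)) ht
  exact ((intervalIntegral.integral_hasDerivWithinAt_right (t := Icc α β)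
    (hcont.mono hsub).intervalIntegrable
    (hcont.stronglyMeasurableAtFilter_nhdsWithin measurableSet_Icc t) (hcont t ht)).const_add
    (u α)).congr hu (hu t ht)

theorem absolutelyContinuousOnInterval (h : SolvesOn α β f u v) (hαβ : α ≤ β) :
    AbsolutelyContinuousOnInterval u α β := by
  obtain ⟨C, hC⟩ := isCompact_Icc.exists_bound_of_continuousOn h.continuousOn_velocity
  have hlip : LipschitzOnWith (Real.toNNReal C) u (Icc α β) :=
    (convex_Icc α β).lipschitzOnWith_of_nnnorm_hasDerivWithin_le h.hasDerivWithinAt fun x hx =>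
      NNReal.coe_le_coe.1 ((hC x hx).trans (Real.le_coe_toNNReal C))
  rw [← uIcc_of_le hαβ] at hlip
  exact hlip.absolutelyContinuousOnInterval

theorem absolutelyContinuousOnInterval_velocity (h : SolvesOn α β f u v) (hαβ : α ≤ β) :
    AbsolutelyContinuousOnInterval v α β := by
  have hint := (h.intervalIntegrable (left_mem_Icc.2 hαβ)
    (right_mem_Icc.2 hαβ)).absolutelyContinuousOnInterval_intervalIntegral left_mem_uIcc
  have hconst : AbsolutelyContinuousOnInterval (fun _ => v α) α β :=
    (LipschitzWith.const (v α)).lipschitzOnWith.absolutelyContinuousOnInterval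
  refine absolutelyContinuousOnInterval_congr (hconst.sub hint) fun t ht => ?_
  rw [uIcc_of_le hαβ] at ht
  exact (h.velocity_eq t ht).symm

theorem hasDerivAt (h : SolvesOn α β f u v) (ht : t ∈ Ioo α β) : HasDerivAt u (v t) t :=
  (h.hasDerivWithinAt t (Ioo_subset_Icc_self ht)).hasDerivAt (Icc_mem_nhds ht.1 ht.2)

theorem ae_hasDerivAt_velocity (h : SolvesOn α β f u v) :
    ∀ᵐ t, t ∈ Ioo α β → HasDerivAt v (-f t) t := by
  rcases le_or_gt β α with hαβ | hαβ
  · simp [Ioo_eq_empty hαβ.not_gt]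
  have hα : α ∈ Icc α β := left_mem_Icc.2 hαβ.le
  filter_upwards [(h.intervalIntegrable hα (right_mem_Icc.2 hαβ.le)).ae_hasDerivAt_integral]
    with t hderiv ht
  have hIoo : ∀ᶠ x in nhds t, v x = v α - ∫ y in α..x, f y :=
    eventually_of_mem (Ioo_mem_nhds ht.1 ht.2) fun x hx => h.velocity_eq x (Ioo_subset_Icc_self hx)
  refine HasDerivAt.congr_of_eventuallyEq ((hderiv ?_ α left_mem_uIcc).const_sub (v α)) hIoo
  exact Ioo_subset_Icc_self.trans Icc_subset_uIcc ht

end SolvesOn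

/-- The point `(u t, v t)` of the phase plane, as a complex number. -/
def phase (u v : ℝ → ℝ) (t : ℝ) : ℂ := ⟨u t, v t⟩

theorem norm_phase_sq (u v : ℝ → ℝ) (t : ℝ) : ‖phase u v t‖ ^ 2 = u t ^ 2 + v t ^ 2 := by
  rw [phase, Complex.sq_norm, Complex.normSq_mk]
  ring

theorem abs_position_le_norm_phase (u v : ℝ → ℝ) (t : ℝ) : |u t| ≤ ‖phase u v t‖ :=
  Complex.abs_re_le_norm (phase u v t)

theorem abs_velocity_le_norm_phase (u v : ℝ → ℝ) (t : ℝ) : |v t| ≤ ‖phase u v t‖ :=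
  Complex.abs_im_le_norm (phase u v t)

namespace SolvesOn

variable {α β s t : ℝ} {f k u v : ℝ → ℝ}

theorem ae_abs_deriv_norm_phase_sq_le (h : SolvesOn α β f u v) (hk0 : ∀ x, 0 ≤ k x)
    (hf : ∀ x ∈ Icc α β, |f x| ≤ k x * |u x|) : ∀ᵐ x, x ∈ Ioo α β →
      |deriv (fun y => ‖phase u v y‖ ^ 2) x| ≤ (1 + k x) * ‖phase u v x‖ ^ 2 := by
  filter_upwards [h.ae_hasDerivAt_velocity] with x hv hx
  have hderiv : HasDerivAt (fun y => u y ^ 2 + v y ^ 2) (2 * (u x * v x - v x * f x)) x := by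
    refine (((h.hasDerivAt hx).pow 2).add ((hv hx).pow 2)).congr_deriv ?_
    push_cast
    ring
  simp only [norm_phase_sq]
  rw [hderiv.deriv]
  have hvf : |v x * f x| ≤ k x * (|u x| * |v x|) := by
    rw [abs_mul]
    linarith [mul_le_mul_of_nonneg_left (hf x (Ioo_subset_Icc_self hx)) (abs_nonneg (v x))]
  have huv : |u x * v x| = |u x| * |v x| := abs_mul _ _
  have hamgm : 2 * (|u x| * |v x|) ≤ u x ^ 2 + v x ^ 2 := by
    rw [← sq_abs (u x), ← sq_abs (v x), ← mul_assoc]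
    exact two_mul_le_add_sq _ _
  calc |2 * (u x * v x - v x * f x)| = 2 * |u x * v x - v x * f x| := by
        rw [abs_mul, abs_two]
    _ ≤ 2 * (|u x| * |v x| + k x * (|u x| * |v x|)) := by
        linarith [abs_sub (u x * v x) (v x * f x)]
    _ = (1 + k x) * (2 * (|u x| * |v x|)) := by ring
    _ ≤ (1 + k x) * (u x ^ 2 + v x ^ 2) :=
        mul_le_mul_of_nonneg_left hamgm (by linarith [hk0 x])

theorem norm_phase_sq_le_and_ge (h : SolvesOn α β f u v) (hαβ : α ≤ β)
    (hk : IntegrableOn k (Icc α β)) (hk0 : ∀ x, 0 ≤ k x)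
    (hf : ∀ x ∈ Icc α β, |f x| ≤ k x * |u x|) :
    ‖phase u v β‖ ^ 2 ≤ Real.exp (∫ x in α..β, (1 + k x)) * ‖phase u v α‖ ^ 2 ∧
      ‖phase u v α‖ ^ 2 ≤ Real.exp (∫ x in α..β, (1 + k x)) * ‖phase u v β‖ ^ 2 := by
  have hα : α ∈ Icc α β := left_mem_Icc.2 hαβ
  have hint : IntervalIntegrable (fun x => 1 + k x) volume α β :=
    intervalIntegrable_const.add
      (intervalIntegrable_of_integrableOn_Icc hk hα (right_mem_Icc.2 hαβ))
  have hAC : AbsolutelyContinuousOnInterval (fun y => ‖phase u v y‖ ^ 2) α β := by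
    have hu := h.absolutelyContinuousOnInterval hαβ
    have hv := h.absolutelyContinuousOnInterval_velocity hαβ
    refine absolutelyContinuousOnInterval_congr ((hu.fun_mul hu).add (hv.fun_mul hv))
      fun y _ => ?_
    simp only [norm_phase_sq, Pi.add_apply]
    ring
  have hA := hint.absolutelyContinuousOnInterval_intervalIntegral left_mem_uIcc
  have hderiv : ∀ᵐ x, x ∈ Ioo α β → |deriv (fun y => ‖phase u v y‖ ^ 2) x| ≤
      deriv (fun y => ∫ z in α..y, (1 + k z)) x * ‖phase u v x‖ ^ 2 := by
    filter_upwards [h.ae_abs_deriv_norm_phase_sq_le hk0 hf, hint.ae_hasDerivAt_integral]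
      with x hN hA' hx
    rw [(hA' (Icc_subset_uIcc (Ioo_subset_Icc_self hx)) α left_mem_uIcc).deriv]
    exact hN hx
  constructor
  · have := mul_exp_neg_le_of_ae_deriv_le_mul hαβ hAC hA
      (hderiv.mono fun x hx hxI => (le_abs_self _).trans (hx hxI))
    rwa [intervalIntegral.integral_same, neg_zero, Real.exp_zero, mul_one, Real.exp_neg,
      ← div_eq_mul_inv, div_le_iff₀' (Real.exp_pos _)] at this
  · have := mul_exp_neg_le_of_ae_deriv_le_mul hαβ hAC.neg hA.neg
      (hderiv.mono fun x hx hxI => by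
        simpa only [deriv.fun_neg', Pi.neg_def, neg_mul_neg] using (neg_le_abs _).trans (hx hxI))
    simp only [Pi.neg_apply, neg_neg, intervalIntegral.integral_same, Real.exp_zero] at this
    linarith

theorem norm_phase_le (h : SolvesOn α β f u v) (hk : IntegrableOn k (Icc α β))
    (hk0 : ∀ x, 0 ≤ k x) (hf : ∀ x ∈ Icc α β, |f x| ≤ k x * |u x|) (hs : s ∈ Icc α β)
    (ht : t ∈ Icc α β) :
    ‖phase u v t‖ ≤ Real.exp (∫ x in α..β, (1 + k x)) * ‖phase u v s‖ := by
  have hαβ : α ≤ β := hs.1.trans hs.2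
  have hsq : ∀ p ∈ Icc α β, ∀ q ∈ Icc α β, p ≤ q →
      ‖phase u v q‖ ^ 2 ≤ Real.exp (∫ x in α..β, (1 + k x)) * ‖phase u v p‖ ^ 2 ∧
        ‖phase u v p‖ ^ 2 ≤ Real.exp (∫ x in α..β, (1 + k x)) * ‖phase u v q‖ ^ 2 := by
    intro p hp q hq hpq
    have hsub : Icc p q ⊆ Icc α β := Icc_subset_Icc hp.1 hq.2
    obtain ⟨hle, hge⟩ := (h.mono hp hq).norm_phase_sq_le_and_ge hpq (hk.mono_set hsub) hk0
      fun x hx => hf x (hsub hx)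
    have hexp : Real.exp (∫ x in p..q, (1 + k x)) ≤ Real.exp (∫ x in α..β, (1 + k x)) :=
      Real.exp_le_exp.2 (intervalIntegral.integral_mono_interval hp.1 hpq hq.2
        (.of_forall fun x => add_nonneg zero_le_one (hk0 x)) (intervalIntegrable_const.add
          (intervalIntegrable_of_integrableOn_Icc hk (left_mem_Icc.2 hαβ) (right_mem_Icc.2 hαβ))))
    exact ⟨hle.trans (mul_le_mul_of_nonneg_right hexp (sq_nonneg _)),
      hge.trans (mul_le_mul_of_nonneg_right hexp (sq_nonneg _))⟩
  have hone : 1 ≤ Real.exp (∫ x in α..β, (1 + k x)) :=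
    Real.one_le_exp (intervalIntegral.integral_nonneg hαβ fun x _ =>
      add_nonneg zero_le_one (hk0 x))
  refine le_of_sq_le_sq ?_ (by positivity)
  rw [mul_pow]
  refine ((le_total s t).elim (fun hst => (hsq s hs t ht hst).1)
    fun hts => (hsq t ht s hs hts).2).trans (mul_le_mul_of_nonneg_right ?_ (sq_nonneg _))
  exact le_self_pow₀ hone two_ne_zero

theorem isSolOn {T : ℝ} (h : SolvesOn 0 T f u v) : IsSolOn T f u v :=
  ⟨h.hasDerivWithinAt, h.continuousOn_velocity, h.velocity_eq⟩

theorem integral_green {g w z : ℝ → ℝ} (hαβ : α ≤ β) (h₁ : SolvesOn α β f u v)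
    (h₂ : SolvesOn α β g w z) :
    ∫ x in α..β, (w x * f x - u x * g x) = (u β * z β - w β * v β) - (u α * z α - w α * v α) := by
  have hAC := ((h₁.absolutelyContinuousOnInterval hαβ).fun_mul
    (h₂.absolutelyContinuousOnInterval_velocity hαβ)).sub
    ((h₂.absolutelyContinuousOnInterval hαβ).fun_mul
      (h₁.absolutelyContinuousOnInterval_velocity hαβ))
  refine Eq.trans ?_ hAC.integral_deriv_eq_sub
  rw [intervalIntegral.integral_of_le hαβ, intervalIntegral.integral_of_le hαβ,
    integral_Ioc_eq_integral_Ioo, integral_Ioc_eq_integral_Ioo]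
  refine setIntegral_congr_ae measurableSet_Ioo ?_
  filter_upwards [h₁.ae_hasDerivAt_velocity, h₂.ae_hasDerivAt_velocity] with x hv hz hx
  have hderiv := ((h₁.hasDerivAt hx).mul (hz hx)).sub ((h₂.hasDerivAt hx).mul (hv hx))
  refine Eq.trans ?_ (Eq.symm (show deriv (_ - _) x = _ from hderiv.deriv))
  ring

end SolvesOn

/-- The factor by which the phase of a solution of `u'' + a G(u) = 0` can grow or decay over
`[α, β]` when `|G s| ≤ C * |s|`. -/
noncomputable def gronwallFactor (C : ℝ) (a : ℝ → ℝ) (α β : ℝ) : ℝ :=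
  Real.exp (∫ x in α..β, (1 + C * |a x|))

theorem gronwallFactor_pos (C : ℝ) (a : ℝ → ℝ) (α β : ℝ) : 0 < gronwallFactor C a α β :=
  Real.exp_pos _

theorem nonneg_of_abs_le_mul_abs {G : ℝ → ℝ} {C : ℝ} (hGC : ∀ x, |G x| ≤ C * |x|) : 0 ≤ C := by
  simpa using (abs_nonneg _).trans (hGC 1)

namespace SolvesOn

variable {α β C s t : ℝ} {a f G u v : ℝ → ℝ}

theorem norm_phase_le_gronwallFactor_mul (h : SolvesOn α β (fun x => a x * G (u x)) u v)
    (ha : IntegrableOn a (Icc α β)) (hGC : ∀ x, |G x| ≤ C * |x|) (hs : s ∈ Icc α β)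
    (ht : t ∈ Icc α β) : ‖phase u v t‖ ≤ gronwallFactor C a α β * ‖phase u v s‖ := by
  refine h.norm_phase_le (ha.abs.const_mul C)
    (fun x => mul_nonneg (nonneg_of_abs_le_mul_abs hGC) (abs_nonneg (a x))) (fun x _ => ?_) hs ht
  rw [abs_mul]
  linarith [mul_le_mul_of_nonneg_left (hGC (u x)) (abs_nonneg (a x))]

theorem exists_velocity_eq_zero (h : SolvesOn α β f u v) (hαβ : α < β) (hu : u α = u β) :
    ∃ t ∈ Icc α β, v t = 0 := by
  obtain ⟨t, ht, hvt⟩ := exists_hasDerivAt_eq_zero hαβ h.continuousOn hu fun x hx => h.hasDerivAt hx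
  exact ⟨t, Ioo_subset_Icc_self ht, hvt⟩

-- The forcing is off as long as `u ≤ 0`, so a downward motion below zero is never reversed.
theorem nonpos_and_velocity_eq (h : SolvesOn α β f u v)
    (hf : ∀ x ∈ Icc α β, u x ≤ 0 → f x = 0) (hu : u α ≤ 0) (hv : v α < 0) :
    ∀ t ∈ Icc α β, u t ≤ 0 ∧ v t = v α := by
  have hclosed : IsClosed ({t | u t ≤ 0 ∧ v t = v α} ∩ Icc α β) := by
    rw [inter_comm]
    exact (h.continuousOn.prodMk h.continuousOn_velocity).preimage_isClosed_of_isClosed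
      isClosed_Icc (isClosed_Iic.prod isClosed_singleton)
  refine fun t ht => hclosed.Icc_subset_of_forall_mem_nhdsWithin ⟨hu, rfl⟩ (fun x hx => ?_) ht
  obtain ⟨⟨hux, hvx⟩, hxI⟩ := hx
  have hxI' : x ∈ Icc α β := Ico_subset_Icc_self hxI
  have hdown : ∀ᶠ y in nhdsWithin x (Ioi x), u y < u x :=
    eventually_lt_of_hasDerivWithinAt_neg (h.hasDerivWithinAt x hxI')
      (Icc_mem_nhdsGT_of_mem hxI) (hvx ▸ hv)
  obtain ⟨c, hxc, hc⟩ := (mem_nhdsGT_iff_exists_Ioo_subset' hxI.2).1 hdown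
  filter_upwards [Ioo_mem_nhdsGT (lt_min hxc hxI.2)] with y hy
  rw [mem_Ioo, lt_min_iff] at hy
  have hyI : y ∈ Icc α β := ⟨hxI.1.trans hy.1.le, hy.2.2.le⟩
  have hle : ∀ z ∈ Icc x y, u z ≤ 0 := fun z hz => hz.1.eq_or_lt.elim (fun hxz => hxz ▸ hux)
    fun hxz => (hc ⟨hxz, hz.2.trans_lt hy.2.1⟩).le.trans hux
  have hzero : ∫ z in x..y, f z = 0 :=
    (intervalIntegral.integral_congr fun z hz => by
      rw [uIcc_of_le hy.1.le] at hz
      exact hf z (Icc_subset_Icc hxI'.1 hyI.2 hz) (hle z hz)).trans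
      intervalIntegral.integral_zero
  exact ⟨hle y (right_mem_Icc.2 hy.1.le),
    by linarith [h.integral_forcing hxI' hyI]⟩

theorem neg_of_nonpos_of_velocity_neg (h : SolvesOn α β f u v)
    (hf : ∀ x ∈ Icc α β, u x ≤ 0 → f x = 0) (hαβ : α < β) (hu : u α ≤ 0) (hv : v α < 0) :
    u β < 0 := by
  have hlin : ∫ x in α..β, v x = ∫ _ in α..β, v α :=
    intervalIntegral.integral_congr fun x hx => by
      rw [uIcc_of_le hαβ.le] at hx
      exact (h.nonpos_and_velocity_eq hf hu hv x hx).2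
  rw [h.integral_velocity (left_mem_Icc.2 hαβ.le) (right_mem_Icc.2 hαβ.le),
    intervalIntegral.integral_const, smul_eq_mul] at hlin
  linarith [mul_neg_of_pos_of_neg (sub_pos.2 hαβ) hv]

-- A first zero with vanishing velocity would force the trivial solution.
theorem velocity_neg_of_first_zero (h : SolvesOn α β (fun x => a x * G (u x)) u v)
    (ha : IntegrableOn a (Icc α β)) (hGC : ∀ x, |G x| ≤ C * |x|) (hαβ : α < β)
    (hpos : ∀ x ∈ Ico α β, 0 < u x) (hu : u β ≤ 0) : v β < 0 := by
  have hα : α ∈ Icc α β := left_mem_Icc.2 hαβ.le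
  have hβ : β ∈ Icc α β := right_mem_Icc.2 hαβ.le
  have hv : v β ≤ 0 := by
    by_contra! hv
    have hbelow : ∀ᶠ y in nhdsWithin β (Iio β), u y < u β :=
      eventually_lt_of_hasDerivWithinAt_pos (h.hasDerivWithinAt β hβ)
        (Icc_mem_nhdsLT_of_mem ⟨hαβ, le_rfl⟩) hv
    obtain ⟨y, hy, hyI⟩ := (hbelow.and (Ico_mem_nhdsLT hαβ)).exists
    linarith [hpos y hyI]
  refine hv.lt_of_ne fun hv0 => ?_
  have hu0 : u β = 0 := by
    have hlim : Tendsto u (nhdsWithin β (Iio β)) (nhds (u β)) :=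
      (h.continuousOn β hβ).mono_of_mem_nhdsWithin (Icc_mem_nhdsLT_of_mem ⟨hαβ, le_rfl⟩)
    refine hu.antisymm (ge_of_tendsto hlim ?_)
    filter_upwards [Ico_mem_nhdsLT hαβ] with y hy using (hpos y hy).le
  have hphase : phase u v β = 0 := Complex.ext hu0 hv0
  have := h.norm_phase_le_gronwallFactor_mul ha hGC hβ hα
  rw [hphase, norm_zero, mul_zero] at this
  linarith [hpos α (left_mem_Ico.2 hαβ), le_abs_self (u α), abs_position_le_norm_phase u v α]

end SolvesOn

/-- `G` is continuous, vanishes on `(-∞, 0]` and grows at most linearly, with constant `C`. -/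
structure OneSidedNonlinearity (G : ℝ → ℝ) (C : ℝ) : Prop where
  continuous : Continuous G
  eq_zero_of_nonpos : ∀ s ≤ 0, G s = 0
  abs_le : ∀ s, |G s| ≤ C * |s|

namespace SolvesOn

variable {α β C s t : ℝ} {a b f G u v : ℝ → ℝ}

theorem nonpos_and_velocity_neg_of_crossing (h : SolvesOn α β (fun x => a x * G (u x)) u v)
    (ha : IntegrableOn a (Icc α β)) (hG : OneSidedNonlinearity G C) (hs : s ∈ Icc α β)
    (ht : t ∈ Icc α β) (hst : s ≤ t) (hus : 0 < u s) (hut : u t ≤ 0) : u β ≤ 0 ∧ v β < 0 := by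
  have hclosed : IsClosed (Icc s t ∩ u ⁻¹' Iic 0) :=
    (h.continuousOn.mono (Icc_subset_Icc hs.1 ht.2)).preimage_isClosed_of_isClosed isClosed_Icc
      isClosed_Iic
  obtain ⟨p, ⟨hpst, hup⟩, hfirst⟩ := (isCompact_Icc.of_isClosed_subset hclosed
    inter_subset_left).exists_isLeast ⟨t, right_mem_Icc.2 hst, hut⟩
  have hsp : s < p := hpst.1.lt_of_ne fun hsp => hus.not_ge (hsp ▸ hup)
  have hp : p ∈ Icc α β := ⟨hs.1.trans hpst.1, hpst.2.trans ht.2⟩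
  have hpos : ∀ x ∈ Ico s p, 0 < u x := fun x hx => by
    by_contra! hux
    exact (hfirst ⟨⟨hx.1, hx.2.le.trans hpst.2⟩, hux⟩).not_gt hx.2
  have hvp : v p < 0 := (h.mono hs hp).velocity_neg_of_first_zero
    (ha.mono_set (Icc_subset_Icc hs.1 hp.2)) hG.abs_le hsp hpos hup
  have hβ : β ∈ Icc α β := right_mem_Icc.2 (hp.1.trans hp.2)
  obtain ⟨huβ, hvβ⟩ := (h.mono hp hβ).nonpos_and_velocity_eq
    (fun x _ hx => by rw [hG.eq_zero_of_nonpos _ hx, mul_zero]) hup hvp β (right_mem_Icc.2 hp.2)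
  exact ⟨huβ, hvβ ▸ hvp⟩

theorem nonpos_and_velocity_neg_of_exists_nonpos (h : SolvesOn α β (fun x => a x * G (u x)) u v)
    (ha : IntegrableOn a (Icc α β)) (hG : OneSidedNonlinearity G C)
    (hstart : 0 < u α ∨ u α = 0 ∧ 0 < v α) (hzero : ∃ t ∈ Ioc α β, u t ≤ 0) :
    u β ≤ 0 ∧ v β < 0 := by
  obtain ⟨t, ht, hut⟩ := hzero
  have hα : α ∈ Icc α β := left_mem_Icc.2 (ht.1.le.trans ht.2)
  rcases hstart with huα | ⟨huα, hvα⟩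
  · exact h.nonpos_and_velocity_neg_of_crossing ha hG hα (Ioc_subset_Icc_self ht) ht.1.le huα hut
  have hup : ∀ᶠ y in nhdsWithin α (Ioi α), -u y < -u α :=
    eventually_lt_of_hasDerivWithinAt_neg (h.hasDerivWithinAt α hα).fun_neg
      (Icc_mem_nhdsGT_of_mem ⟨le_rfl, ht.1.trans_le ht.2⟩) (neg_lt_zero.2 hvα)
  obtain ⟨s, hus, hs⟩ := (hup.and (Ioo_mem_nhdsGT ht.1)).exists
  exact h.nonpos_and_velocity_neg_of_crossing ha hG ⟨hs.1.le, hs.2.le.trans ht.2⟩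
    (Ioc_subset_Icc_self ht) hs.2.le (by linarith) hut

theorem pos_of_pos_of_nonneg (h : SolvesOn α β (fun x => a x * G (u x)) u v)
    (ha : IntegrableOn a (Icc α β)) (hG : OneSidedNonlinearity G C) (hα : 0 < u α)
    (hβ : 0 < u β ∨ 0 ≤ v β) : ∀ t ∈ Icc α β, 0 < u t := by
  intro t ht
  by_contra! hut
  obtain ⟨huβ, hvβ⟩ := h.nonpos_and_velocity_neg_of_crossing ha hG
    (left_mem_Icc.2 (ht.1.trans ht.2)) ht ht.1 hα hut
  rcases hβ with hβ | hβ <;> linarith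

theorem abs_velocity_sub_le (h : SolvesOn α β f u v) (hb : IntegrableOn b (Icc α β))
    (hf : ∀ x ∈ Icc α β, |f x| ≤ b x) (hs : s ∈ Icc α β) (ht : t ∈ Icc α β) :
    |v t - v s| ≤ ∫ x in α..β, b x := by
  wlog hst : s ≤ t generalizing s t
  · rw [abs_sub_comm]
    exact this ht hs (le_of_not_ge hst)
  have hαβ : α ≤ β := hs.1.trans hs.2
  have hsub : Icc s t ⊆ Icc α β := Icc_subset_Icc hs.1 ht.2
  rw [abs_sub_comm, ← h.integral_forcing hs ht]
  calc |∫ x in s..t, f x| = ‖∫ x in s..t, f x‖ := (Real.norm_eq_abs _).symm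
    _ ≤ ∫ x in s..t, b x := intervalIntegral.norm_integral_le_of_norm_le hst
          (.of_forall fun x hx => hf x (hsub (Ioc_subset_Icc_self hx)))
          (intervalIntegrable_of_integrableOn_Icc hb hs ht)
    _ ≤ ∫ x in α..β, b x := intervalIntegral.integral_mono_interval hs.1 hst ht.2
        ((ae_restrict_iff' measurableSet_Ioc).2 <| .of_forall fun x hx =>
          (abs_nonneg _).trans (hf x (Ioc_subset_Icc_self hx)))
        (intervalIntegrable_of_integrableOn_Icc hb (left_mem_Icc.2 hαβ) (right_mem_Icc.2 hαβ))

theorem pos_of_integral_lt_velocity (h : SolvesOn α β f u v) (hαβ : α < β)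
    (hb : IntegrableOn b (Icc α β)) (hf : ∀ x ∈ Icc α β, |f x| ≤ b x) (hu : 0 ≤ u α)
    (hv : ∫ x in α..β, b x < v α) : 0 < u β := by
  obtain ⟨c, hc, hslope⟩ := exists_hasDerivAt_eq_slope u v hαβ h.continuousOn
    fun x hx => h.hasDerivAt hx
  have hvc := abs_le.1 (h.abs_velocity_sub_le hb hf (left_mem_Icc.2 hαβ.le)
    (Ioo_subset_Icc_self hc))
  rw [eq_div_iff (sub_pos.2 hαβ).ne'] at hslope
  have : 0 < v c * (β - α) := mul_pos (by linarith) (sub_pos.2 hαβ)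
  linarith

theorem abs_position_sub_le (h : SolvesOn α β f u v) (hb : IntegrableOn b (Icc α β))
    (hf : ∀ x ∈ Icc α β, |f x| ≤ b x) (hv : ∃ t₀ ∈ Icc α β, v t₀ = 0) (ht : t ∈ Icc α β) :
    |u t - u α| ≤ (β - α) * ∫ x in α..β, b x := by
  obtain ⟨t₀, ht₀, hvt₀⟩ := hv
  have hα : α ∈ Icc α β := left_mem_Icc.2 (ht.1.trans ht.2)
  have hvel : ∀ x ∈ Icc α β, |v x| ≤ ∫ x in α..β, b x := fun x hx => by
    simpa only [hvt₀, sub_zero] using h.abs_velocity_sub_le hb hf ht₀ hx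
  calc |u t - u α| = ‖∫ x in α..t, v x‖ := by rw [h.integral_velocity hα ht, Real.norm_eq_abs]
    _ ≤ (∫ x in α..β, b x) * |t - α| := intervalIntegral.norm_integral_le_of_norm_le_const
        fun x hx => hvel x (uIcc_subset_Icc hα ht (uIoc_subset_uIcc hx))
    _ ≤ (β - α) * ∫ x in α..β, b x := by
        rw [abs_of_nonneg (sub_nonneg.2 ht.1), mul_comm]
        exact mul_le_mul_of_nonneg_right (by linarith [ht.2]) ((abs_nonneg _).trans (hvel t ht))

theorem abs_position_sub_le_mul {ε η : ℝ} (h : SolvesOn α β f u v)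
    (ha : IntegrableOn a (Icc α β)) (hf : ∀ x ∈ Icc α β, |f x| ≤ |a x| * (ε * |u x|))
    (hε : 0 ≤ ε) (hη : (β - α) * (∫ x in α..β, |a x|) * ε ≤ η) (hη2 : η ≤ 1 / 2)
    (hv : ∃ t₀ ∈ Icc α β, v t₀ = 0) (ht : t ∈ Icc α β) : |u t - u α| ≤ η * (2 * |u α|) := by
  have hα : α ∈ Icc α β := left_mem_Icc.2 (ht.1.trans ht.2)
  obtain ⟨p, hp, hmax⟩ := isCompact_Icc.exists_isMaxOn ⟨α, hα⟩ h.continuousOn.abs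
  have hbound : ∀ x ∈ Icc α β, |f x| ≤ |a x| * (ε * |u p|) := fun x hx => (hf x hx).trans
    (mul_le_mul_of_nonneg_left (mul_le_mul_of_nonneg_left (hmax hx) hε) (abs_nonneg _))
  have hsub : ∀ x ∈ Icc α β, |u x - u α| ≤ η * |u p| := fun x hx => by
    refine (h.abs_position_sub_le (ha.abs.mul_const _) hbound hv hx).trans ?_
    rw [intervalIntegral.integral_mul_const]
    linarith [mul_le_mul_of_nonneg_right hη (abs_nonneg (u p))]
  have hη0 : 0 ≤ η := by
    refine le_trans (mul_nonneg (mul_nonneg (by linarith [ht.1, ht.2]) ?_) hε) hη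
    exact intervalIntegral.integral_nonneg (ht.1.trans ht.2) fun x _ => abs_nonneg (a x)
  have hup : |u p| ≤ 2 * |u α| := by
    have h₁ := abs_sub_abs_le_abs_sub (u p) (u α)
    have h₂ := mul_le_mul_of_nonneg_right hη2 (abs_nonneg (u p))
    linarith [hsub p hp]
  exact (hsub t ht).trans (mul_le_mul_of_nonneg_left hup hη0)

theorem velocity_lt_of_abs_sub_le {κ y : ℝ} (h : SolvesOn α β (fun x => a x * G (u x)) u v)
    (hαβ : α ≤ β) (ha : IntegrableOn a (Icc α β)) (hy : 0 < y)
    (hclose : ∀ x ∈ Icc α β, |G (u x) - y| ≤ κ * y)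
    (hκ : (∫ x in α..β, |a x|) * κ < -∫ x in α..β, a x) : v α < v β := by
  have hα : α ∈ Icc α β := left_mem_Icc.2 hαβ
  have hβ : β ∈ Icc α β := right_mem_Icc.2 hαβ
  have hai := intervalIntegrable_of_integrableOn_Icc ha hα hβ
  have hle : ∫ x in α..β, a x * G (u x) ≤ ∫ x in α..β, (a x * y + |a x| * (κ * y)) := by
    refine intervalIntegral.integral_mono_on hαβ (h.intervalIntegrable hα hβ)
      ((hai.mul_const y).add (hai.abs.mul_const _)) fun x hx => ?_
    have := mul_le_mul_of_nonneg_left (hclose x hx) (abs_nonneg (a x))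
    rw [← abs_mul] at this
    linarith [le_abs_self (a x * (G (u x) - y))]
  rw [h.integral_forcing hα hβ, intervalIntegral.integral_add (hai.mul_const y)
    (hai.abs.mul_const _), intervalIntegral.integral_mul_const,
    intervalIntegral.integral_mul_const] at hle
  linarith [mul_lt_mul_of_pos_right hκ hy]

end SolvesOn

section SmallSolutions

open Asymptotics

variable {α β C : ℝ} {a G : ℝ → ℝ}

theorem exists_radius_of_eventually_nhds_zero (ha : IntegrableOn a (Icc α β))
    (hGC : ∀ x, |G x| ≤ C * |x|) {p : ℝ → Prop} (hp : ∀ᶠ s in nhds 0, p s) :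
    ∃ ρ > 0, ∀ u v, SolvesOn α β (fun x => a x * G (u x)) u v → ‖phase u v α‖ ≤ ρ →
      ∀ x ∈ Icc α β, p (u x) := by
  obtain ⟨δ, hδ, hpδ⟩ := Metric.eventually_nhds_iff.1 hp
  obtain ⟨ρ, hρ, hρδ⟩ := exists_pos_mul_lt hδ (gronwallFactor C a α β)
  refine ⟨ρ, hρ, fun u v h hsmall x hx => hpδ ?_⟩
  rw [dist_zero_right, Real.norm_eq_abs]
  calc |u x| ≤ ‖phase u v x‖ := abs_position_le_norm_phase u v x
    _ ≤ gronwallFactor C a α β * ‖phase u v α‖ :=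
        h.norm_phase_le_gronwallFactor_mul ha hGC (left_mem_Icc.2 (hx.1.trans hx.2)) hx
    _ ≤ gronwallFactor C a α β * ρ :=
        mul_le_mul_of_nonneg_left hsmall (gronwallFactor_pos C a α β).le
    _ < δ := hρδ

theorem exists_radius_pos_of_isLittleO (hαβ : α < β) (ha : IntegrableOn a (Icc α β))
    (hGC : ∀ x, |G x| ≤ C * |x|) (hG0 : G =o[nhds 0] fun s => s) :
    ∃ ρ > 0, ∀ u v, SolvesOn α β (fun x => a x * G (u x)) u v → ‖phase u v α‖ ≤ ρ →
      u α = 0 → 0 < v α → 0 < u β := by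
  set K := gronwallFactor C a α β
  obtain ⟨ε, hε, hεA⟩ := exists_pos_mul_lt one_pos ((∫ x in α..β, |a x|) * K)
  obtain ⟨ρ, hρ, hsmall⟩ := exists_radius_of_eventually_nhds_zero ha hGC (hG0.def hε)
  refine ⟨ρ, hρ, fun u v h hphase hu hv => ?_⟩
  have hnorm : ‖phase u v α‖ = v α := by
    rw [← abs_of_pos hv]
    exact (Complex.abs_im_eq_norm.2 hu).symm
  refine h.pos_of_integral_lt_velocity hαβ (ha.abs.mul_const (ε * (K * v α))) (fun x hx => ?_)
    hu.ge ?_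
  · rw [abs_mul]
    refine mul_le_mul_of_nonneg_left ((hsmall u v h hphase x hx).trans
      (mul_le_mul_of_nonneg_left ?_ hε.le)) (abs_nonneg _)
    rw [← hnorm]
    exact (abs_position_le_norm_phase u v x).trans
      (h.norm_phase_le_gronwallFactor_mul ha hGC (left_mem_Icc.2 hαβ.le) hx)
  · rw [intervalIntegral.integral_mul_const]
    linarith [mul_lt_mul_of_pos_right hεA hv]

-- Small solutions with a critical point are nearly constant, so by regular oscillation
-- `v β - v α = -∫ a G(u)` is close to `-G(u α) ∫ a > 0`.
theorem exists_radius_velocity_lt (hαβ : α < β) (ha : IntegrableOn a (Icc α β))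
    (hmean : ∫ x in α..β, a x < 0) (hGC : ∀ x, |G x| ≤ C * |x|)
    (hG0 : G =o[nhds 0] fun s => s) (hGpos : ∀ s, 0 < s → 0 < G s) (hreg : RegOscAtZero G) :
    ∃ ρ > 0, ∀ u v, SolvesOn α β (fun x => a x * G (u x)) u v → ‖phase u v α‖ ≤ ρ →
      0 < u α → (∃ t ∈ Icc α β, v t = 0) → v α < v β := by
  obtain ⟨κ, hκ, hκA⟩ := exists_pos_mul_lt (neg_pos.2 hmean) (∫ x in α..β, |a x|)
  obtain ⟨δ, hδ, η, hη, hosc⟩ := hreg κ hκ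
  have hη' : 0 < min (η / 4) (1 / 2) := lt_min (by linarith) (by norm_num)
  obtain ⟨ε, hε, hεA⟩ := exists_pos_mul_lt hη' ((β - α) * ∫ x in α..β, |a x|)
  obtain ⟨ρ, hρ, hsmall⟩ := exists_radius_of_eventually_nhds_zero ha hGC
    ((hG0.def hε).and (eventually_lt_nhds hδ))
  refine ⟨ρ, hρ, fun u v h hphase hu hv => ?_⟩
  have hα : α ∈ Icc α β := left_mem_Icc.2 hαβ.le
  refine h.velocity_lt_of_abs_sub_le hαβ.le ha (hGpos _ hu) (fun x hx => ?_) hκA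
  have hsub := h.abs_position_sub_le_mul ha (fun y hy => by
    rw [abs_mul]
    exact mul_le_mul_of_nonneg_left (hsmall u v h hphase y hy).1 (abs_nonneg _))
    hε.le hεA.le (min_le_right _ _) hv hx
  have hratio : |u x / u α - 1| < η := by
    rw [div_sub_one hu.ne', abs_div, abs_of_pos hu, div_lt_iff₀ hu]
    rw [abs_of_pos hu] at hsub
    nlinarith [min_le_left (η / 4) (1 / 2)]
  have hG := hosc (u α) (u x / u α) hu (hsmall u v h hphase α hα).2 hratio
  rw [div_mul_cancel₀ _ hu.ne', div_sub_one (hGpos _ hu).ne', abs_div, abs_of_pos (hGpos _ hu),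
    div_lt_iff₀ (hGpos _ hu)] at hG
  exact hG.le

end SmallSolutions

namespace SolvesOn

variable {α β t : ℝ} {f u v : ℝ → ℝ}

theorem antitoneOn_velocity (h : SolvesOn α β f u v)
    (hf : ∀ᵐ x ∂(volume.restrict (Icc α β)), 0 ≤ f x) : AntitoneOn v (Icc α β) := by
  intro s hs t ht hst
  have hint : 0 ≤ ∫ x in s..t, f x := intervalIntegral.integral_nonneg_of_ae_restrict hst
    (ae_restrict_of_ae_restrict_of_subset (Icc_subset_Icc hs.1 ht.2) hf)
  linarith [h.integral_forcing hs ht]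

theorem velocity_mul_le (h : SolvesOn α β f u v) (hv : AntitoneOn v (Icc α β))
    (ht : t ∈ Icc α β) : v t * (t - α) ≤ u t - u α := by
  have hα : α ∈ Icc α β := left_mem_Icc.2 (ht.1.trans ht.2)
  have hsub : Icc α t ⊆ Icc α β := Icc_subset_Icc_right ht.2
  have hmono := intervalIntegral.integral_mono_on (μ := volume) ht.1
    (intervalIntegrable_const (c := v t))
    ((h.continuousOn_velocity.mono hsub).intervalIntegrable_of_Icc ht.1)
    fun x hx => hv (hsub hx) ht hx.2
  rw [intervalIntegral.integral_const, smul_eq_mul, h.integral_velocity hα ht] at hmono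
  linarith

theorem neg_velocity_mul_le (h : SolvesOn α β f u v) (hv : AntitoneOn v (Icc α β))
    (ht : t ∈ Icc α β) : -v t * (β - t) ≤ u t - u β := by
  have hβ : β ∈ Icc α β := right_mem_Icc.2 (ht.1.trans ht.2)
  have hsub : Icc t β ⊆ Icc α β := Icc_subset_Icc_left ht.1
  have hmono := intervalIntegral.integral_mono_on (μ := volume) ht.2
    ((h.continuousOn_velocity.mono hsub).intervalIntegrable_of_Icc ht.2)
    (intervalIntegrable_const (c := v t)) fun x hx => hv ht (hsub hx) hx.1
  rw [intervalIntegral.integral_const, smul_eq_mul, h.integral_velocity ht hβ] at hmono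
  linarith

theorem norm_phase_mul_le (h : SolvesOn α β f u v) (hv : AntitoneOn v (Icc α β))
    (hu : ∀ x ∈ Icc α β, 0 ≤ u x) (ht : t ∈ Icc α β) :
    ‖phase u v t‖ * min (t - α) (β - t) ≤ (1 + (β - α)) * u t := by
  have hαβ : α ≤ β := ht.1.trans ht.2
  have hd : 0 ≤ min (t - α) (β - t) := le_min (sub_nonneg.2 ht.1) (sub_nonneg.2 ht.2)
  have hdle : min (t - α) (β - t) ≤ β - α := (min_le_left _ _).trans (by linarith [ht.2])
  have hslope : |v t| * min (t - α) (β - t) ≤ u t := by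
    rcases abs_cases (v t) with ⟨hvt, hsign⟩ | ⟨hvt, hsign⟩ <;> rw [hvt]
    · refine (mul_le_mul_of_nonneg_left (min_le_left _ _) hsign).trans ?_
      linarith [h.velocity_mul_le hv ht, hu α (left_mem_Icc.2 hαβ)]
    · refine (mul_le_mul_of_nonneg_left (min_le_right _ _) (neg_nonneg.2 hsign.le)).trans ?_
      linarith [h.neg_velocity_mul_le hv ht, hu β (right_mem_Icc.2 hαβ)]
  calc ‖phase u v t‖ * min (t - α) (β - t)
      ≤ (|u t| + |v t|) * min (t - α) (β - t) :=
        mul_le_mul_of_nonneg_right (Complex.norm_le_abs_re_add_abs_im (phase u v t)) hd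
    _ ≤ (1 + (β - α)) * u t := by
        rw [abs_of_nonneg (hu t ht)]
        linarith [mul_le_mul_of_nonneg_left hdle (hu t ht)]

end SolvesOn

/-- `φ`, with derivative `φ'`, is an eigenfunction of `φ'' + lam * a * φ = 0` on `[σ, τ]` with
Dirichlet boundary conditions, positive inside: a `DirichletEigenpair` with its witnesses named. -/
structure PositiveEigenfunction (a : ℝ → ℝ) (σ τ lam : ℝ) (φ φ' : ℝ → ℝ) : Prop where
  solvesOn : SolvesOn σ τ (fun t => lam * (a t * φ t)) φ φ'
  pos : ∀ t ∈ Ioo σ τ, 0 < φ t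
  left : φ σ = 0
  right : φ τ = 0

theorem exists_positiveEigenfunction_of_dirichletEigenpair {a : ℝ → ℝ} {σ τ lam : ℝ}
    (ha : IntegrableOn a (Icc σ τ)) (h : DirichletEigenpair a σ τ lam) :
    ∃ φ φ' : ℝ → ℝ, PositiveEigenfunction a σ τ lam φ φ' := by
  obtain ⟨φ, φ', hderiv, hcont, hpos, hσ, hτ, heq⟩ := h
  have hφ : ContinuousOn φ (Icc σ τ) := fun t ht => (hderiv t ht).continuousWithinAt
  refine ⟨φ, φ', ⟨hderiv, hcont, (ha.mul_continuousOn hφ isCompact_Icc).const_mul lam,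
    fun t ht => ?_⟩, hpos, hσ, hτ⟩
  rw [heq t ht, intervalIntegral.integral_const_mul]

namespace PositiveEigenfunction

variable {a G u v φ φ' ψ : ℝ → ℝ} {σ τ lam mu B t : ℝ}

theorem nonneg (hφ : PositiveEigenfunction a σ τ lam φ φ') (ht : t ∈ Icc σ τ) : 0 ≤ φ t := by
  rcases ht.1.eq_or_lt with rfl | hσt
  · exact hφ.left.ge
  rcases ht.2.eq_or_lt with rfl | htτ
  · exact hφ.right.ge
  exact (hφ.pos t ⟨hσt, htτ⟩).le

theorem velocity_left_nonneg (hφ : PositiveEigenfunction a σ τ lam φ φ') (hστ : σ < τ) :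
    0 ≤ φ' σ := by
  by_contra! hneg
  obtain ⟨y, hy, hyI⟩ := ((eventually_lt_of_hasDerivWithinAt_neg
    (hφ.solvesOn.hasDerivWithinAt σ (left_mem_Icc.2 hστ.le))
    (Icc_mem_nhdsGT_of_mem ⟨le_rfl, hστ⟩) hneg).and (Ioo_mem_nhdsGT hστ)).exists
  linarith [hφ.pos y hyI, hφ.left]

theorem velocity_right_nonpos (hφ : PositiveEigenfunction a σ τ lam φ φ') (hστ : σ < τ) :
    φ' τ ≤ 0 := by
  by_contra! hpos
  obtain ⟨y, hy, hyI⟩ := ((eventually_lt_of_hasDerivWithinAt_pos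
    (hφ.solvesOn.hasDerivWithinAt τ (right_mem_Icc.2 hστ.le))
    (Icc_mem_nhdsLT_of_mem ⟨hστ, le_rfl⟩) hpos).and (Ioo_mem_nhdsLT hστ)).exists
  linarith [hφ.pos y hyI, hφ.right]

theorem integrableOn_mul (hφ : PositiveEigenfunction a σ τ lam φ φ') (ha : IntegrableOn a (Icc σ τ))
    (hψ : ContinuousOn ψ (Icc σ τ)) : IntegrableOn (fun x => a x * φ x * ψ x) (Icc σ τ) :=
  (ha.mul_continuousOn hφ.solvesOn.continuousOn isCompact_Icc).mul_continuousOn hψ isCompact_Icc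

-- Without forcing `φ` would be affine, hence zero.
theorem not_ae_mul_eq_zero (hφ : PositiveEigenfunction a σ τ lam φ φ') (hστ : σ < τ) :
    ¬ ∀ᵐ x ∂(volume.restrict (Ioc σ τ)), a x * φ x = 0 := by
  intro hzero
  have hσ : σ ∈ Icc σ τ := left_mem_Icc.2 hστ.le
  have hconst : ∀ t ∈ Icc σ τ, φ' t = φ' σ := fun t ht => by
    have hint : ∫ x in σ..t, lam * (a x * φ x) = 0 := by
      rw [intervalIntegral.integral_of_le ht.1]
      refine integral_eq_zero_of_ae ?_
      filter_upwards [ae_restrict_of_ae_restrict_of_subset (Ioc_subset_Ioc_right ht.2) hzero]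
        with x hx using by rw [hx, mul_zero, Pi.zero_apply]
    linarith [hφ.solvesOn.velocity_eq t ht]
  have hrest : φ' σ = 0 := le_antisymm
    (hconst τ (right_mem_Icc.2 hστ.le) ▸ hφ.velocity_right_nonpos hστ)
    (hφ.velocity_left_nonneg hστ)
  obtain ⟨t, ht⟩ := nonempty_Ioo.2 hστ
  have ht' : t ∈ Icc σ τ := Ioo_subset_Icc_self ht
  have hφt : ∫ x in σ..t, φ' x = 0 := (intervalIntegral.integral_congr fun x hx =>
    (hconst x (uIcc_subset_Icc hσ ht' hx)).trans hrest).trans intervalIntegral.integral_zero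
  linarith [hφ.solvesOn.integral_velocity hσ ht', hφ.left, hφ.pos t ht]

theorem integral_mul_pos (hφ : PositiveEigenfunction a σ τ lam φ φ') (hστ : σ < τ)
    (ha : IntegrableOn a (Icc σ τ)) (ha0 : ∀ᵐ x ∂(volume.restrict (Icc σ τ)), 0 ≤ a x)
    (hψ : ContinuousOn ψ (Icc σ τ)) (hψ0 : ∀ x ∈ Icc σ τ, 0 ≤ ψ x)
    (hψpos : ∀ x ∈ Ioo σ τ, 0 < ψ x) : 0 < ∫ x in σ..τ, a x * φ x * ψ x := by
  have hae : ∀ᵐ x ∂(volume.restrict (Icc σ τ)), 0 ≤ a x * φ x * ψ x := by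
    filter_upwards [ha0, ae_restrict_mem measurableSet_Icc] with x hx hxI
    exact mul_nonneg (mul_nonneg hx (hφ.nonneg hxI)) (hψ0 x hxI)
  refine (intervalIntegral.integral_nonneg_of_ae_restrict hστ.le hae).lt_of_ne' fun hint => ?_
  rw [intervalIntegral.integral_eq_zero_iff_of_le_of_nonneg_ae hστ.le
    (ae_restrict_of_ae_restrict_of_subset Ioc_subset_Icc_self hae)
    (intervalIntegrable_of_integrableOn_Icc (hφ.integrableOn_mul ha hψ)
      (left_mem_Icc.2 hστ.le) (right_mem_Icc.2 hστ.le)), ← restrict_Ioo_eq_restrict_Ioc] at hint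
  refine hφ.not_ae_mul_eq_zero hστ ?_
  rw [← restrict_Ioo_eq_restrict_Ioc]
  filter_upwards [hint, ae_restrict_mem measurableSet_Ioo] with x hx hxI
  exact (mul_eq_zero.1 hx).resolve_right (hψpos x hxI).ne'

theorem integral_mul_sub_mul_nonpos {f : ℝ → ℝ} (hφ : PositiveEigenfunction a σ τ lam φ φ')
    (hστ : σ < τ) (h : SolvesOn σ τ f u v) (hu : ∀ x ∈ Icc σ τ, 0 ≤ u x) :
    ∫ x in σ..τ, (φ x * f x - u x * (lam * (a x * φ x))) ≤ 0 := by
  rw [SolvesOn.integral_green hστ.le h hφ.solvesOn, hφ.left, hφ.right]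
  linarith [mul_nonneg (hu σ (left_mem_Icc.2 hστ.le)) (hφ.velocity_left_nonneg hστ),
    mul_nonneg (hu τ (right_mem_Icc.2 hστ.le)) (neg_nonneg.2 (hφ.velocity_right_nonpos hστ))]

theorem sub_mul_integral_le (hφ : PositiveEigenfunction a σ τ lam φ φ') (hστ : σ < τ)
    (ha : IntegrableOn a (Icc σ τ)) (ha0 : ∀ᵐ x ∂(volume.restrict (Icc σ τ)), 0 ≤ a x)
    (hG : ∀ s, 0 ≤ s → mu * s - B ≤ G s) (h : SolvesOn σ τ (fun x => a x * G (u x)) u v)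
    (hu : ∀ x ∈ Icc σ τ, 0 ≤ u x) :
    (mu - lam) * ∫ x in σ..τ, a x * φ x * u x ≤ B * ∫ x in σ..τ, a x * φ x := by
  have hII : ∀ {k : ℝ → ℝ}, IntegrableOn k (Icc σ τ) → IntervalIntegrable k volume σ τ := fun hk =>
    intervalIntegrable_of_integrableOn_Icc hk (left_mem_Icc.2 hστ.le) (right_mem_Icc.2 hστ.le)
  have haφ : IntervalIntegrable (fun x => a x * φ x) volume σ τ :=
    hII (ha.mul_continuousOn hφ.solvesOn.continuousOn isCompact_Icc)
  have haφu : IntervalIntegrable (fun x => a x * φ x * u x) volume σ τ :=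
    hII (hφ.integrableOn_mul ha h.continuousOn)
  have hφf : IntervalIntegrable (fun x => φ x * (a x * G (u x))) volume σ τ :=
    hII (h.integrableOn_forcing.continuousOn_mul hφ.solvesOn.continuousOn isCompact_Icc)
  have hug : IntervalIntegrable (fun x => u x * (lam * (a x * φ x))) volume σ τ :=
    hII (hφ.solvesOn.integrableOn_forcing.continuousOn_mul h.continuousOn isCompact_Icc)
  have hle : ∫ x in σ..τ, ((mu - lam) * (a x * φ x * u x) - B * (a x * φ x)) ≤
      ∫ x in σ..τ, (φ x * (a x * G (u x)) - u x * (lam * (a x * φ x))) := by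
    refine intervalIntegral.integral_mono_ae_restrict hστ.le
      ((haφu.const_mul _).sub (haφ.const_mul _)) (hφf.sub hug) ?_
    filter_upwards [ha0, ae_restrict_mem measurableSet_Icc] with x hx hxI
    linarith [mul_le_mul_of_nonneg_left (hG (u x) (hu x hxI)) (mul_nonneg hx (hφ.nonneg hxI))]
  rw [intervalIntegral.integral_sub (haφu.const_mul _) (haφ.const_mul _),
    intervalIntegral.integral_const_mul, intervalIntegral.integral_const_mul] at hle
  linarith [hφ.integral_mul_sub_mul_nonpos hστ h hu]

theorem norm_mul_integral_le (hφ : PositiveEigenfunction a σ τ lam φ φ') {r : ℝ} (hστ : σ < τ)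
    (ha : IntegrableOn a (Icc σ τ)) (ha0 : ∀ᵐ x ∂(volume.restrict (Icc σ τ)), 0 ≤ a x)
    (hGnonneg : ∀ s, 0 ≤ G s) (h : SolvesOn σ τ (fun x => a x * G (u x)) u v)
    (hu : ∀ x ∈ Icc σ τ, 0 ≤ u x) (hr : ∀ x ∈ Icc σ τ, r ≤ ‖phase u v x‖) :
    r * ∫ x in σ..τ, a x * φ x * min (x - σ) (τ - x) ≤
      (1 + (τ - σ)) * ∫ x in σ..τ, a x * φ x * u x := by
  have hII : ∀ {ψ : ℝ → ℝ}, ContinuousOn ψ (Icc σ τ) →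
      IntervalIntegrable (fun x => a x * φ x * ψ x) volume σ τ := fun hψ =>
    intervalIntegrable_of_integrableOn_Icc (hφ.integrableOn_mul ha hψ) (left_mem_Icc.2 hστ.le)
      (right_mem_Icc.2 hστ.le)
  have hv : AntitoneOn v (Icc σ τ) :=
    h.antitoneOn_velocity (ha0.mono fun x hx => mul_nonneg hx (hGnonneg _))
  rw [← intervalIntegral.integral_const_mul, ← intervalIntegral.integral_const_mul]
  refine intervalIntegral.integral_mono_ae_restrict hστ.le
    ((hII (by fun_prop)).const_mul _) ((hII h.continuousOn).const_mul _) ?_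
  filter_upwards [ha0, ae_restrict_mem measurableSet_Icc] with x hx hxI
  have hd : 0 ≤ min (x - σ) (τ - x) := le_min (sub_nonneg.2 hxI.1) (sub_nonneg.2 hxI.2)
  have hweight : r * min (x - σ) (τ - x) ≤ (1 + (τ - σ)) * u x :=
    (mul_le_mul_of_nonneg_right (hr x hxI) hd).trans (h.norm_phase_mul_le hv hu hxI)
  linarith [mul_le_mul_of_nonneg_left hweight (mul_nonneg hx (hφ.nonneg hxI))]

theorem exists_radius_exists_nonpos {α β C : ℝ} (hφ : PositiveEigenfunction a σ τ lam φ φ')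
    (hστ : σ < τ) (hσ : α ≤ σ) (hτ : τ ≤ β) (ha : IntegrableOn a (Icc α β))
    (ha0 : ∀ᵐ x ∂(volume.restrict (Icc σ τ)), 0 ≤ a x) (hGC : ∀ s, |G s| ≤ C * |s|)
    (hGnonneg : ∀ s, 0 ≤ G s) (hmu : lam < mu) (hG : ∀ s, 0 ≤ s → mu * s - B ≤ G s) :
    ∃ R, ∀ u v, SolvesOn α β (fun x => a x * G (u x)) u v → 0 ≤ u α → R ≤ ‖phase u v α‖ →
      ∃ t ∈ Ioc α β, u t ≤ 0 := by
  set K := gronwallFactor C a α β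
  have hK : 0 < K := gronwallFactor_pos C a α β
  have hsub : Icc σ τ ⊆ Icc α β := Icc_subset_Icc hσ hτ
  have haστ : IntegrableOn a (Icc σ τ) := ha.mono_set hsub
  set J := ∫ x in σ..τ, a x * φ x * min (x - σ) (τ - x)
  have hJ : 0 < J := hφ.integral_mul_pos hστ haστ ha0 (by fun_prop)
    (fun x hx => le_min (sub_nonneg.2 hx.1) (sub_nonneg.2 hx.2))
    (fun x hx => lt_min (sub_pos.2 hx.1) (sub_pos.2 hx.2))
  set M := (1 + (τ - σ)) * (B * ∫ x in σ..τ, a x * φ x)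
  have hc : 0 < (mu - lam) * J := mul_pos (sub_pos.2 hmu) hJ
  refine ⟨K * (M / ((mu - lam) * J) + 1), fun u v h hu hR => ?_⟩
  by_contra! hpos
  have hu' : ∀ x ∈ Icc α β, 0 ≤ u x := fun x hx =>
    hx.1.eq_or_lt.elim (fun hαx => hαx ▸ hu) fun hαx => (hpos x ⟨hαx, hx.2⟩).le
  have hα : α ∈ Icc α β := left_mem_Icc.2 (hσ.trans (hστ.le.trans hτ))
  have hlarge : ∀ x ∈ Icc σ τ, M / ((mu - lam) * J) + 1 ≤ ‖phase u v x‖ := fun x hx =>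
    le_of_mul_le_mul_left (hR.trans (h.norm_phase_le_gronwallFactor_mul ha hGC (hsub hx) hα)) hK
  have hστu := h.mono (hsub (left_mem_Icc.2 hστ.le)) (hsub (right_mem_Icc.2 hστ.le))
  have hlow := hφ.norm_mul_integral_le hστ haστ ha0 hGnonneg hστu (fun x hx => hu' x (hsub hx))
    hlarge
  have hup := hφ.sub_mul_integral_le hστ haστ ha0 hG hστu fun x hx => hu' x (hsub hx)
  have hMle : (M / ((mu - lam) * J) + 1) * ((mu - lam) * J) ≤ M := by
    have h₁ := mul_le_mul_of_nonneg_left hlow (sub_nonneg.2 hmu.le)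
    have h₂ := mul_le_mul_of_nonneg_left hup (show 0 ≤ 1 + (τ - σ) by linarith)
    linarith
  rw [add_mul, div_mul_cancel₀ _ hc.ne'] at hMle
  linarith

end PositiveEigenfunction

theorem exists_subseq_tendstoUniformlyOn_of_lipschitzOnWith {α β M : ℝ} {L : NNReal}
    (hαβ : α ≤ β) {u : ℕ → ℝ → ℝ} (hlip : ∀ n, LipschitzOnWith L (u n) (Icc α β))
    (hbound : ∀ n, ∀ t ∈ Icc α β, |u n t| ≤ M) :
    ∃ w : ℝ → ℝ, ContinuousOn w (Icc α β) ∧ ∃ s : ℕ → ℕ, StrictMono s ∧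
      TendstoUniformlyOn (fun n => u (s n)) w atTop (Icc α β) := by
  let F : ℕ → BoundedContinuousFunction (Icc α β) ℝ := fun n =>
    BoundedContinuousFunction.mkOfCompact
      ⟨(Icc α β).domRestrict (u n), (hlip n).continuousOn.domRestrict⟩
  have hcompact : IsCompact (closure (range F)) := by
    refine BoundedContinuousFunction.arzela_ascoli (Icc (-M) M) isCompact_Icc (range F) ?_ ?_
    · rintro _ t ⟨n, rfl⟩
      exact abs_le.1 (hbound n t t.2)
    · refine (LipschitzWith.uniformEquicontinuous _ L ?_).equicontinuous
      rintro ⟨_, n, rfl⟩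
      exact (hlip n).to_restrict
  obtain ⟨f, -, s, hs, hlim⟩ :=
    hcompact.tendsto_subseq fun n => subset_closure (mem_range_self (f := F) n)
  refine ⟨IccExtend hαβ f, f.continuous.Icc_extend'.continuousOn, s, hs, ?_⟩
  rw [tendstoUniformlyOn_iff_tendstoUniformly_comp_coe]
  rw [show IccExtend hαβ f ∘ Subtype.val = f from funext fun t => IccExtend_val hαβ f t]
  exact BoundedContinuousFunction.tendsto_iff_tendstoUniformly.1 hlim

namespace SolvesOn

variable {α β R : ℝ} {f k u v : ℝ → ℝ} {fs us vs : ℕ → ℝ → ℝ}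

theorem abs_velocity_le {t : ℝ} (h : SolvesOn α β f u v) (hk : IntegrableOn k (Icc α β))
    (hf : ∀ x ∈ Icc α β, |f x| ≤ k x) (hR : ‖phase u v α‖ ≤ R) (ht : t ∈ Icc α β) :
    |v t| ≤ R + ∫ x in α..β, k x := by
  have hsub := h.abs_velocity_sub_le hk hf (left_mem_Icc.2 (ht.1.trans ht.2)) ht
  linarith [abs_sub_abs_le_abs_sub (v t) (v α), (abs_velocity_le_norm_phase u v α).trans hR]

theorem exists_subseq_tendstoUniformlyOn (hαβ : α ≤ β)
    (h : ∀ n, SolvesOn α β (fs n) (us n) (vs n)) (hk : IntegrableOn k (Icc α β))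
    (hf : ∀ n, ∀ x ∈ Icc α β, |fs n x| ≤ k x) (hR : ∀ n, ‖phase (us n) (vs n) α‖ ≤ R) :
    ∃ w : ℝ → ℝ, ContinuousOn w (Icc α β) ∧ ∃ s : ℕ → ℕ, StrictMono s ∧
      TendstoUniformlyOn (fun n => us (s n)) w atTop (Icc α β) := by
  set L := R + ∫ x in α..β, k x
  have hα : α ∈ Icc α β := left_mem_Icc.2 hαβ
  have hvel : ∀ n, ∀ x ∈ Icc α β, |vs n x| ≤ L := fun n x hx =>
    (h n).abs_velocity_le hk (hf n) (hR n) hx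
  have hL : 0 ≤ L := (abs_nonneg _).trans (hvel 0 α hα)
  have hlip : ∀ n, LipschitzOnWith (Real.toNNReal L) (us n) (Icc α β) := fun n =>
    (convex_Icc α β).lipschitzOnWith_of_nnnorm_hasDerivWithin_le (h n).hasDerivWithinAt fun x hx =>
      NNReal.coe_le_coe.1 ((hvel n x hx).trans (Real.le_coe_toNNReal L))
  refine exists_subseq_tendstoUniformlyOn_of_lipschitzOnWith hαβ hlip
    (M := R + L * (β - α)) fun n t ht => ?_
  have hdist := (hlip n).dist_le_mul t ht α hα
  rw [Real.dist_eq, Real.dist_eq, Real.coe_toNNReal L hL, abs_of_nonneg (sub_nonneg.2 ht.1)]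
    at hdist
  have hdiam : L * (t - α) ≤ L * (β - α) := mul_le_mul_of_nonneg_left (by linarith [ht.2]) hL
  linarith [abs_sub_abs_le_abs_sub (us n t) (us n α),
    (abs_position_le_norm_phase (us n) (vs n) α).trans (hR n)]

theorem exists_tendsto_of_tendsto {z : ℂ} (hαβ : α ≤ β)
    (h : ∀ n, SolvesOn α β (fs n) (us n) (vs n)) (hk : IntegrableOn k (Icc α β))
    (hf : ∀ n, ∀ x ∈ Icc α β, |fs n x| ≤ k x) (hR : ∀ n, ‖phase (us n) (vs n) α‖ ≤ R)
    (hz : Tendsto (fun n => phase (us n) (vs n) α) atTop (nhds z))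
    (hflim : ∀ x ∈ Icc α β, Tendsto (fun n => fs n x) atTop (nhds (f x)))
    (hulim : ∀ x ∈ Icc α β, Tendsto (fun n => us n x) atTop (nhds (u x))) :
    ∃ v, SolvesOn α β f u v ∧ phase u v α = z ∧
      ∀ t ∈ Icc α β, Tendsto (fun n => phase (us n) (vs n) t) atTop (nhds (phase u v t)) := by
  have hα : α ∈ Icc α β := left_mem_Icc.2 hαβ
  have hsub : ∀ {t}, t ∈ Icc α β → ∀ {x}, x ∈ uIoc α t → x ∈ Icc α β := fun ht _ hx =>
    uIcc_subset_Icc hα ht (uIoc_subset_uIcc hx)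
  have hfint : IntegrableOn f (Icc α β) :=
    hk.mono' (aestronglyMeasurable_of_tendsto_ae atTop
      (fun n => (h n).integrableOn_forcing.aestronglyMeasurable)
      ((ae_restrict_iff' measurableSet_Icc).2 (.of_forall hflim)))
      ((ae_restrict_iff' measurableSet_Icc).2 (.of_forall fun x hx =>
        le_of_tendsto (hflim x hx).abs (.of_forall fun n => hf n x hx)))
  set v : ℝ → ℝ := fun t => z.im - ∫ x in α..t, f x
  have hvlim : ∀ t ∈ Icc α β, Tendsto (fun n => vs n t) atTop (nhds (v t)) := by
    intro t ht
    simp_rw [fun n => (h n).velocity_eq t ht]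
    exact ((Complex.continuous_im.tendsto z).comp hz).sub
      (intervalIntegral.tendsto_integral_filter_of_dominated_convergence k
        (.of_forall fun n => ((h n).intervalIntegrable hα ht).def'.aestronglyMeasurable)
        (.of_forall fun n => .of_forall fun x hx => hf n x (hsub ht hx))
        (intervalIntegrable_of_integrableOn_Icc hk hα ht)
        (.of_forall fun x hx => hflim x (hsub ht hx)))
  have hplim : ∀ t ∈ Icc α β,
      Tendsto (fun n => phase (us n) (vs n) t) atTop (nhds (phase u v t)) := fun t ht =>
    (Complex.equivRealProdCLM.symm.continuous.tendsto (u t, v t)).comp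
      ((hulim t ht).prodMk_nhds (hvlim t ht))
  refine ⟨v, of_integral_eq hfint (fun t ht => ?_) (fun t _ => by simp [v]),
    tendsto_nhds_unique (hplim α hα) hz, hplim⟩
  have hint : Tendsto (fun n => ∫ x in α..t, vs n x) atTop (nhds (∫ x in α..t, v x)) :=
    intervalIntegral.tendsto_integral_filter_of_dominated_convergence
      (fun _ => R + ∫ x in α..β, k x)
      (.of_forall fun n => (((h n).continuousOn_velocity.mono
        (uIcc_subset_Icc hα ht)).intervalIntegrable).def'.aestronglyMeasurable)
      (.of_forall fun n => .of_forall fun x hx =>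
        (h n).abs_velocity_le hk (hf n) (hR n) (hsub ht hx))
      intervalIntegrable_const (.of_forall fun x hx => hvlim x (hsub ht hx))
  simp_rw [fun n => (h n).integral_velocity hα ht] at hint
  linarith [tendsto_nhds_unique hint ((hulim t ht).sub (hulim α hα))]

end SolvesOn

section DelayedEquation

variable {b G : ℝ → ℝ} {B δ : ℝ} {U : ℂ → ℝ → ℝ}

/-- The velocity at time `t` of a motion starting at `z` under the force `-b G` of the path `U z`
delayed by `δ`; before time `δ` the delayed path rests at its initial point. -/
noncomputable def delayedVelocity (b G : ℝ → ℝ) (δ : ℝ) (U : ℂ → ℝ → ℝ) (z : ℂ) (t : ℝ) : ℝ :=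
  z.im - ∫ s in (0 : ℝ)..t, b s * G (U z (max (s - δ) 0))

/-- Iterated approximations to the solution of the delayed equation `u'' + b G(u(· - δ)) = 0` with
initial phase `z`; the `k`-th one is exact up to time `k δ`. -/
noncomputable def delayedPosition (b G : ℝ → ℝ) (δ : ℝ) : ℕ → ℂ → ℝ → ℝ
  | 0 => fun z _ => z.re
  | k + 1 => fun z t =>
    z.re + ∫ r in (0 : ℝ)..t, delayedVelocity b G δ (delayedPosition b G δ k) z r

theorem continuous_delayedVelocity (hb : Integrable b) (hG : Continuous G) (hB : ∀ s, |G s| ≤ B)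
    (hU : Continuous (Function.uncurry U)) :
    Continuous (Function.uncurry (delayedVelocity b G δ U)) := by
  have hc : Continuous fun p : ℂ × ℝ => G (U p.1 (max (p.2 - δ) 0)) :=
    hG.comp (hU.comp (by fun_prop : Continuous fun p : ℂ × ℝ => (p.1, max (p.2 - δ) 0)))
  refine (Complex.continuous_im.comp continuous_fst).sub (continuous_iff_continuousAt.2 ?_)
  rintro ⟨z, t⟩
  refine intervalIntegral.continuousAt_parametric_primitive_of_dominated
    (F := fun (z : ℂ) s => b s * G (U z (max (s - δ) 0)))
    (fun s => |b s| * B) (-|t| - 1) (|t| + 1) (fun z => ?_) (.of_forall fun z => ?_)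
    (hb.abs.mul_const B).intervalIntegrable (.of_forall fun s => ?_)
    ⟨by linarith [abs_nonneg t], by linarith [abs_nonneg t]⟩
    ⟨by linarith [neg_abs_le t], by linarith [le_abs_self t]⟩ Real.volume_singleton
  · exact hb.aestronglyMeasurable.restrict.mul
      (hc.comp (Continuous.prodMk_right z)).aestronglyMeasurable
  · refine .of_forall fun s => ?_
    rw [Real.norm_eq_abs, abs_mul]
    exact mul_le_mul_of_nonneg_left (hB _) (abs_nonneg _)
  · exact (continuous_const.mul (hc.comp (Continuous.prodMk_left s))).continuousAt

theorem continuous_delayedPosition (hb : Integrable b) (hG : Continuous G) (hB : ∀ s, |G s| ≤ B)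
    (k : ℕ) : Continuous (Function.uncurry (delayedPosition b G δ k)) := by
  induction k with
  | zero => exact Complex.continuous_re.comp continuous_fst
  | succ k ih =>
    exact (Complex.continuous_re.comp continuous_fst).add
      (intervalIntegral.continuous_parametric_primitive_of_continuous
        (continuous_delayedVelocity hb hG hB ih))

theorem delayedVelocity_congr {U' : ℂ → ℝ → ℝ} {z : ℂ} {c t : ℝ} (hc : 0 ≤ c)
    (hU : EqOn (U z) (U' z) (Icc 0 c)) (ht : t ∈ Icc 0 (c + δ)) :
    delayedVelocity b G δ U z t = delayedVelocity b G δ U' z t := by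
  unfold delayedVelocity
  congr 1
  refine intervalIntegral.integral_congr fun s hs => ?_
  rw [uIcc_of_le ht.1] at hs
  simp only [hU ⟨le_max_right _ _, max_le (by linarith [hs.2, ht.2] : s - δ ≤ c) hc⟩]

theorem delayedPosition_succ_eqOn (hδ : 0 ≤ δ) (z : ℂ) (k : ℕ) :
    EqOn (delayedPosition b G δ (k + 1) z) (delayedPosition b G δ k z) (Icc 0 (k * δ)) := by
  induction k with
  | zero =>
    intro t ht
    obtain rfl : t = 0 := by simpa using ht
    simp [delayedPosition]
  | succ k ih =>
    intro t ht
    refine congrArg (z.re + ·) (intervalIntegral.integral_congr fun r hr => ?_)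
    rw [uIcc_of_le ht.1] at hr
    refine delayedVelocity_congr (by positivity) ih ⟨hr.1, hr.2.trans (ht.2.trans_eq ?_)⟩
    push_cast
    ring

theorem exists_continuous_solvesOn_delayed (T : ℝ) (hb : Integrable b) (hG : Continuous G)
    (hB : ∀ s, |G s| ≤ B) (hδ : 0 < δ) : ∃ U V : ℂ → ℝ → ℝ,
      Continuous (Function.uncurry U) ∧ Continuous (Function.uncurry V) ∧
      ∀ z, SolvesOn 0 T (fun s => b s * G (U z (max (s - δ) 0))) (U z) (V z) ∧
        phase (U z) (V z) 0 = z := by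
  obtain ⟨k, hk⟩ := exists_nat_ge (T / δ)
  rw [div_le_iff₀ hδ] at hk
  have hU := continuous_delayedPosition (δ := δ) hb hG hB (k + 1)
  have hV := continuous_delayedVelocity (δ := δ) hb hG hB
    (continuous_delayedPosition (δ := δ) hb hG hB k)
  refine ⟨delayedPosition b G δ (k + 1), delayedVelocity b G δ (delayedPosition b G δ k),
    hU, hV, fun z => ?_⟩
  have hU0 : delayedPosition b G δ (k + 1) z 0 = z.re := by simp [delayedPosition]
  have hV0 : delayedVelocity b G δ (delayedPosition b G δ k) z 0 = z.im := by
    simp [delayedVelocity]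
  have hforcing : Continuous fun s => G (delayedPosition b G δ (k + 1) z (max (s - δ) 0)) :=
    hG.comp (hU.comp (by fun_prop : Continuous fun s : ℝ => (z, max (s - δ) 0)))
  refine ⟨.of_integral_eq ?_ (fun t _ => by rw [hU0]; rfl) fun t ht => ?_, Complex.ext hU0 hV0⟩
  · exact (hb.mul_bdd (c := B) hforcing.aestronglyMeasurable
      (.of_forall fun s => hB _)).integrableOn
  · rw [hV0]
    exact delayedVelocity_congr (by positivity)
      (delayedPosition_succ_eqOn hδ.le z k).symm ⟨ht.1, by linarith [ht.2]⟩

end DelayedEquation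

/-- The set of phases at time `T` of the solutions of `u'' + a G(u) = 0` with phase `z` at time `0`:
the Poincaré map, set-valued because uniqueness is not assumed. -/
def poincare (T : ℝ) (a G : ℝ → ℝ) (z : ℂ) : Set ℂ :=
  {w | ∃ u v, SolvesOn 0 T (fun t => a t * G (u t)) u v ∧ phase u v 0 = z ∧ phase u v T = w}

section Poincare

variable {T B C : ℝ} {a b G : ℝ → ℝ}

theorem exists_mem_poincare_of_delayed (hT : 0 ≤ T) (hb : IntegrableOn b (Icc 0 T))
    (hG : Continuous G) (hB : ∀ s, |G s| ≤ B) {δ : ℕ → ℝ} {us vs : ℕ → ℝ → ℝ} {z : ℂ}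
    (hδ : ∀ n, 0 ≤ δ n) (hδ0 : Tendsto δ atTop (nhds 0))
    (h : ∀ n, SolvesOn 0 T (fun s => b s * G (us n (max (s - δ n) 0))) (us n) (vs n))
    (hz : Tendsto (fun n => phase (us n) (vs n) 0) atTop (nhds z)) :
    ∃ w ∈ poincare T b G z, ∃ s : ℕ → ℕ, StrictMono s ∧
      Tendsto (fun n => phase (us (s n)) (vs (s n)) T) atTop (nhds w) := by
  have hbound : ∀ n, ∀ x ∈ Icc 0 T, |b x * G (us n (max (x - δ n) 0))| ≤ |b x| * B := fun n x _ =>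
    (abs_mul _ _).trans_le (mul_le_mul_of_nonneg_left (hB _) (abs_nonneg _))
  obtain ⟨R, hR⟩ := hz.norm.bddAbove_range
  replace hR : ∀ n, ‖phase (us n) (vs n) 0‖ ≤ R := fun n => hR (mem_range_self n)
  obtain ⟨u, hu, s, hs, hunif⟩ :=
    SolvesOn.exists_subseq_tendstoUniformlyOn hT h (hb.abs.mul_const B) hbound hR
  have hdelay : ∀ x ∈ Icc 0 T, Tendsto (fun n => max (x - δ (s n)) 0) atTop
      (nhdsWithin x (Icc 0 T)) := fun x hx => by
    refine tendsto_nhdsWithin_iff.2 ⟨?_, .of_forall fun n => ⟨le_max_right _ _,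
      max_le (by linarith [hx.2, hδ (s n)]) hT⟩⟩
    simpa only [Function.comp_apply, sub_zero, max_eq_left hx.1] using
      ((hδ0.comp hs.tendsto_atTop).const_sub x).max (tendsto_const_nhds (x := (0 : ℝ)))
  obtain ⟨v, hsol, hinit, hlim⟩ := SolvesOn.exists_tendsto_of_tendsto hT (fun n => h (s n))
    (hb.abs.mul_const B) (fun n => hbound (s n)) (fun n => hR (s n)) (hz.comp hs.tendsto_atTop)
    (fun x hx => ((hG.tendsto _).comp
      (hunif.tendsto_comp (hu x hx) (hdelay x hx))).const_mul (b x))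
    (fun x hx => hunif.tendsto_at hx)
  exact ⟨_, ⟨u, v, hsol, hinit, rfl⟩, s, hs, hlim T (right_mem_Icc.2 hT)⟩

theorem exists_continuous_subconvergesOn_poincare_of_bounded (hT : 0 ≤ T)
    (ha : IntegrableOn a (Icc 0 T)) (hG : Continuous G) (hB : ∀ s, |G s| ≤ B) :
    ∃ Φ : ℕ → ℂ → ℂ, (∀ n, Continuous (Φ n)) ∧ SubconvergesOn Φ (poincare T a G) univ := by
  choose U V hU hV hUV using fun n : ℕ => exists_continuous_solvesOn_delayed T
    ((integrable_indicator_iff measurableSet_Icc).2 ha) hG hB (Nat.one_div_pos_of_nat (n := n))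
  refine ⟨fun n z => phase (U n z) (V n z) T, fun n => ?_, fun k x x₀ hk _ _ hx => ?_⟩
  · exact Complex.equivRealProdCLM.symm.continuous.comp
      (((hU n).comp (Continuous.prodMk_left T)).prodMk ((hV n).comp (Continuous.prodMk_left T)))
  refine exists_mem_poincare_of_delayed hT ha hG hB (δ := fun n => 1 / ((k n : ℝ) + 1))
    (fun n => Nat.one_div_pos_of_nat.le) (tendsto_one_div_add_atTop_nhds_zero_nat.comp hk)
    (fun n => ((hUV (k n)) (x n)).1.congr fun s hs => by simp only [indicator_of_mem hs]) ?_
  simpa only [fun n => (hUV (k n) (x n)).2] using hx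

theorem exists_continuous_subconvergesOn_poincare (hT : 0 ≤ T) (ha : IntegrableOn a (Icc 0 T))
    (hG : Continuous G) (hGC : ∀ s, |G s| ≤ C * |s|) (R : ℝ) :
    ∃ Φ : ℕ → ℂ → ℂ, (∀ n, Continuous (Φ n)) ∧
      SubconvergesOn Φ (poincare T a G) (Metric.closedBall 0 R) := by
  set M := |gronwallFactor C a 0 T * R|
  have hC := nonneg_of_abs_le_mul_abs hGC
  set H : ℝ → ℝ := fun s => G (max (-M) (min M s))
  have hMM : -M ≤ M := neg_le_self (abs_nonneg _)
  have hclamp : ∀ s, |max (-M) (min M s)| ≤ min M |s| := fun s => by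
    rcases abs_cases s with ⟨hs, -⟩ | ⟨hs, -⟩ <;> rw [hs, abs_le]
    all_goals grind
  have hH : Continuous H := by fun_prop
  have hHM : ∀ s, |H s| ≤ C * M := fun s =>
    (hGC _).trans (mul_le_mul_of_nonneg_left ((hclamp s).trans (min_le_left _ _)) hC)
  have hHC : ∀ s, |H s| ≤ C * |s| := fun s =>
    (hGC _).trans (mul_le_mul_of_nonneg_left ((hclamp s).trans (min_le_right _ _)) hC)
  obtain ⟨Φ, hΦ, hsub⟩ := exists_continuous_subconvergesOn_poincare_of_bounded hT ha hH hHM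
  refine ⟨Φ, hΦ, (hsub.mono_set (subset_univ _)).mono_right fun z hz w hw => ?_⟩
  obtain ⟨u, v, h, rfl, rfl⟩ := hw
  refine ⟨u, v, h.congr fun t ht => ?_, rfl, rfl⟩
  have hut : |u t| ≤ M := by
    refine (abs_position_le_norm_phase u v t).trans ((h.norm_phase_le_gronwallFactor_mul ha hHC
      (left_mem_Icc.2 hT) ht).trans (le_trans ?_ (le_abs_self _)))
    exact mul_le_mul_of_nonneg_left (mem_closedBall_zero_iff.1 hz) (gronwallFactor_pos C a 0 T).le
  simp only [H, min_eq_right (abs_le.1 hut).2, max_eq_right (abs_le.1 hut).1]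

end Poincare

theorem IsSolOn.congr {T : ℝ} {f f' u v : ℝ → ℝ} (h : IsSolOn T f u v)
    (hf : EqOn f f' (Icc 0 T)) : IsSolOn T f' u v := by
  refine ⟨h.1, h.2.1, fun x hx => ?_⟩
  rw [h.2.2 x hx, intervalIntegral.integral_congr fun t ht => ?_]
  rw [uIcc_of_le hx.1] at ht
  exact hf ⟨ht.1, ht.2.trans hx.2⟩

theorem PosSolNeumann.congr {T : ℝ} {a g G : ℝ → ℝ} (h : PosSolNeumann T a G)
    (hG : EqOn G g (Ioi 0)) : PosSolNeumann T a g := by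
  obtain ⟨u, v, hsol, hpos, hbc⟩ := h
  exact ⟨u, v, hsol.congr fun t ht => congrArg (a t * ·) (hG (hpos t ht)), hpos, hbc⟩

theorem PosSolPeriodic.congr {T : ℝ} {a g G : ℝ → ℝ} (h : PosSolPeriodic T a G)
    (hG : EqOn G g (Ioi 0)) : PosSolPeriodic T a g := by
  obtain ⟨u, v, hsol, hpos, hbc⟩ := h
  exact ⟨u, v, hsol.congr fun t ht => congrArg (a t * ·) (hG (hpos t ht)), hpos, hbc⟩

namespace SolvesOn

variable {α β C : ℝ} {a G u v : ℝ → ℝ}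

theorem pos_or_velocity_pos_of_position_eq (h : SolvesOn α β (fun x => a x * G (u x)) u v)
    (hG : OneSidedNonlinearity G C) (hαβ : α < β) (hα : 0 ≤ u α) (hphase : 0 < ‖phase u v α‖)
    (hu : u β = u α) : 0 < u α ∨ u α = 0 ∧ 0 < v α := by
  refine hα.lt_or_eq'.imp_right fun huα => ⟨huα, ?_⟩
  by_contra! hv
  have hvα : v α ≠ 0 := fun hvα => norm_pos_iff.1 hphase (Complex.ext huα hvα)
  have huβ := h.neg_of_nonpos_of_velocity_neg
    (fun x _ hx => by rw [hG.eq_zero_of_nonpos _ hx, mul_zero]) hαβ huα.le (hv.lt_of_ne hvα)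
  linarith

theorem pos_of_periodic (h : SolvesOn α β (fun x => a x * G (u x)) u v)
    (ha : IntegrableOn a (Icc α β)) (hG : OneSidedNonlinearity G C) (hαβ : α < β)
    (hα : 0 ≤ u α) (hphase : 0 < ‖phase u v α‖) (hu : u β = u α) (hv : v β = v α) :
    ∀ t ∈ Icc α β, 0 < u t := by
  have hstart := h.pos_or_velocity_pos_of_position_eq hG hαβ hα hphase hu
  rcases hstart with huα | ⟨huα, hvα⟩
  · exact h.pos_of_pos_of_nonneg ha hG huα (.inl (hu ▸ huα))
  have := (h.nonpos_and_velocity_neg_of_exists_nonpos ha hG (.inr ⟨huα, hvα⟩)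
    ⟨β, right_mem_Ioc.2 hαβ, (hu.trans huα).le⟩).2
  linarith

end SolvesOn

/-- The displacements `w - z` of the Poincaré map at `z`, turned by a quarter so that their signs on
the boundary of a half annulus are those of `SubconvergesOn.exists_zero_mem_of_rectangle`. -/
def turnedDisplacement (T : ℝ) (a G : ℝ → ℝ) (z : ℂ) : Set ℂ :=
  (fun w => Complex.I * (w - z)) '' poincare T a G z

section Displacement

variable {T C : ℝ} {a G : ℝ → ℝ} {z : ℂ}

theorem turnedDisplacement_subset {U : Set ℂ}
    (hU : ∀ u v, SolvesOn 0 T (fun t => a t * G (u t)) u v → phase u v 0 = z →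
      (⟨v 0 - v T, u T - u 0⟩ : ℂ) ∈ U) : turnedDisplacement T a G z ⊆ U := by
  rintro _ ⟨_, ⟨u, v, h, rfl, rfl⟩, rfl⟩
  convert hU u v h rfl using 1
  apply Complex.ext <;> simp [phase]

theorem turnedDisplacement_subset_im_neg (hG : OneSidedNonlinearity G C) (hT : 0 < T)
    (hre : z.re = 0) (him : z.im < 0) : turnedDisplacement T a G z ⊆ {w | w.im < 0} := by
  refine turnedDisplacement_subset ?_
  rintro u v h rfl
  exact sub_neg.2 ((h.neg_of_nonpos_of_velocity_neg
    (fun x _ hx => by rw [hG.eq_zero_of_nonpos _ hx, mul_zero]) hT hre.le him).trans_eq hre.symm)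

theorem turnedDisplacement_subset_slitPlane_of_re_eq_zero (hG : OneSidedNonlinearity G C)
    (hT : 0 < T) (ha : IntegrableOn a (Icc 0 T)) (hre : z.re = 0) (him : 0 < z.im) :
    turnedDisplacement T a G z ⊆ Complex.slitPlane := by
  refine turnedDisplacement_subset ?_
  rintro u v h rfl
  refine or_iff_not_imp_right.2 fun hu => sub_pos.2 ?_
  have huT : u T = u 0 := by simpa [sub_eq_zero] using hu
  exact (h.nonpos_and_velocity_neg_of_exists_nonpos ha hG (.inr ⟨hre, him⟩)
    ⟨T, right_mem_Ioc.2 hT, (huT.trans hre).le⟩).2.trans him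

end Displacement

/-- Radii `ρ` and `R` suited to shooting in the phase plane: solutions of `u'' + a G(u) = 0` leaving
from the closed disc of radius `ρ` cannot turn back to zero by time `T` and gain velocity once it
has vanished, whereas those leaving from outside the open disc of radius `R` hit zero. -/
structure ShootingAnnulus (T : ℝ) (a G : ℝ → ℝ) (ρ R : ℝ) : Prop where
  pos : 0 < ρ
  le : ρ ≤ R
  pos_of_norm_le : ∀ u v, SolvesOn 0 T (fun x => a x * G (u x)) u v → ‖phase u v 0‖ ≤ ρ →
    u 0 = 0 → 0 < v 0 → 0 < u T
  velocity_lt_of_norm_le : ∀ u v, SolvesOn 0 T (fun x => a x * G (u x)) u v → ‖phase u v 0‖ ≤ ρ →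
    0 < u 0 → (∃ t ∈ Icc 0 T, v t = 0) → v 0 < v T
  exists_nonpos_of_le_norm : ∀ u v, SolvesOn 0 T (fun x => a x * G (u x)) u v → 0 ≤ u 0 →
    R ≤ ‖phase u v 0‖ → ∃ t ∈ Ioc 0 T, u t ≤ 0

namespace ShootingAnnulus

variable {T C ρ R : ℝ} {a G : ℝ → ℝ} {z : ℂ}

theorem posSolNeumann (hA : ShootingAnnulus T a G ρ R) (hG : OneSidedNonlinearity G C)
    (hT : 0 ≤ T) (ha : IntegrableOn a (Icc 0 T)) : PosSolNeumann T a G := by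
  have hρR : Icc ρ R ⊆ Ioi 0 := fun r hr => hA.pos.trans_le hr.1
  have hmaps : MapsTo Complex.ofReal (Icc ρ R) (Metric.closedBall 0 R) := fun r hr => by
    simpa only [mem_closedBall_zero_iff, Complex.norm_of_nonneg (hρR hr).le] using hr.2
  obtain ⟨Φ, hΦ, hlim⟩ := exists_continuous_subconvergesOn_poincare hT ha hG.continuous hG.abs_le R
  have hnorm : ∀ {u v : ℝ → ℝ} {r : ℝ}, phase u v 0 = r → r ∈ Icc ρ R →
      u 0 = r ∧ v 0 = 0 ∧ ‖phase u v 0‖ = r := fun h hr =>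
    ⟨congrArg Complex.re h, congrArg Complex.im h, by rw [h, Complex.norm_of_nonneg (hρR hr).le]⟩
  obtain ⟨r, hr, -, ⟨u, v, h, hinit, rfl⟩, hvT⟩ :=
    (hlim.comp Complex.continuous_ofReal hmaps (ψ := fun p => p.2.im)
      (by fun_prop)).exists_zero_mem_of_Icc hA.le
      (fun n => (Complex.continuous_im.comp ((hΦ n).comp Complex.continuous_ofReal)).continuousOn)
      (by
        rintro _ ⟨-, ⟨u, v, h, hinit, rfl⟩, rfl⟩
        obtain ⟨hu0, hv0, hρ⟩ := hnorm hinit (left_mem_Icc.2 hA.le)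
        exact hv0 ▸ hA.velocity_lt_of_norm_le u v h hρ.le (hu0 ▸ hA.pos)
          ⟨0, left_mem_Icc.2 hT, hv0⟩)
      (by
        rintro _ ⟨-, ⟨u, v, h, hinit, rfl⟩, rfl⟩
        obtain ⟨hu0, -, hR⟩ := hnorm hinit (right_mem_Icc.2 hA.le)
        have hu0' : 0 < u 0 := hu0 ▸ hA.pos.trans_le hA.le
        exact (h.nonpos_and_velocity_neg_of_exists_nonpos ha hG (.inl hu0')
          (hA.exists_nonpos_of_le_norm u v h hu0'.le hR.ge)).2)
  obtain ⟨hu0, hv0, -⟩ := hnorm hinit hr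
  exact ⟨u, v, h.isSolOn, h.pos_of_pos_of_nonneg ha hG (hu0 ▸ hρR hr) (.inr hvT.ge), hv0, hvT⟩

theorem neg_mem_slitPlane_of_mem_turnedDisplacement (hA : ShootingAnnulus T a G ρ R)
    (hG : OneSidedNonlinearity G C) (hT : 0 < T) (hre : 0 ≤ z.re) (hz : ‖z‖ = ρ) :
    ∀ w ∈ turnedDisplacement T a G z, -w ∈ Complex.slitPlane := by
  refine turnedDisplacement_subset (U := -Complex.slitPlane) ?_
  rintro u v h rfl
  refine or_iff_not_imp_right.2 fun hu => ?_
  have huT : u 0 = u T := by simpa [sub_eq_zero] using hu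
  suffices v 0 < v T by simpa
  rcases h.pos_or_velocity_pos_of_position_eq hG hT hre (hz ▸ hA.pos) huT.symm with
    hpos | ⟨hu0, hv0⟩
  · exact hA.velocity_lt_of_norm_le u v h hz.le hpos (h.exists_velocity_eq_zero hT huT)
  · linarith [hA.pos_of_norm_le u v h hz.le hu0 hv0]

theorem turnedDisplacement_subset_slitPlane (hA : ShootingAnnulus T a G ρ R)
    (hG : OneSidedNonlinearity G C) (hT : 0 < T) (ha : IntegrableOn a (Icc 0 T)) (hre : 0 ≤ z.re)
    (hz : ‖z‖ = R) : turnedDisplacement T a G z ⊆ Complex.slitPlane := by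
  refine turnedDisplacement_subset ?_
  rintro u v h rfl
  refine or_iff_not_imp_right.2 fun hu => ?_
  have huT : u T = u 0 := by simpa [sub_eq_zero] using hu
  suffices v T < v 0 by simpa
  have hstart := h.pos_or_velocity_pos_of_position_eq hG hT hre (hz ▸ hA.pos.trans_le hA.le) huT
  have hend := h.nonpos_and_velocity_neg_of_exists_nonpos ha hG hstart
    (hA.exists_nonpos_of_le_norm u v h hre hz.ge)
  rcases hstart with hpos | ⟨-, hv⟩ <;> linarith

theorem turnedDisplacement_subset_im_pos (hA : ShootingAnnulus T a G ρ R) (hre : z.re = 0)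
    (him : 0 < z.im) (hz : ‖z‖ = ρ) : turnedDisplacement T a G z ⊆ {w | 0 < w.im} := by
  refine turnedDisplacement_subset ?_
  rintro u v h rfl
  exact sub_pos.2 (hre.trans_lt (hA.pos_of_norm_le u v h hz.le hre him))

theorem exists_mem_poincare_self (hA : ShootingAnnulus T a G ρ R)
    (hG : OneSidedNonlinearity G C) (hT : 0 < T) (ha : IntegrableOn a (Icc 0 T)) :
    ∃ z : ℂ, 0 ≤ z.re ∧ 0 < ‖z‖ ∧ z ∈ poincare T a G z := by
  set κ : ℝ × ℝ → ℂ := fun p => p.1 * Complex.exp (p.2 * Complex.I)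
  have hcd : -(Real.pi / 2) ≤ Real.pi / 2 := neg_le_self Real.pi_div_two_pos.le
  have hκ : Continuous κ := by fun_prop
  have hκre : ∀ r θ : ℝ, (κ (r, θ)).re = r * Real.cos θ := fun r θ => by
    rw [Complex.re_ofReal_mul, Complex.exp_ofReal_mul_I_re]
  have hκim : ∀ r θ : ℝ, (κ (r, θ)).im = r * Real.sin θ := fun r θ => by
    rw [Complex.im_ofReal_mul, Complex.exp_ofReal_mul_I_im]
  have hnorm : ∀ {r θ}, r ∈ Icc ρ R → ‖κ (r, θ)‖ = r := fun hr => by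
    rw [norm_mul, Complex.norm_exp_ofReal_mul_I, mul_one,
      Complex.norm_of_nonneg (hA.pos.le.trans hr.1)]
  have hre : ∀ {r θ}, r ∈ Icc ρ R → θ ∈ Icc (-(Real.pi / 2)) (Real.pi / 2) → 0 ≤ (κ (r, θ)).re :=
    fun hr hθ => (hκre _ _).symm ▸
      mul_nonneg (hA.pos.le.trans hr.1) (Real.cos_nonneg_of_mem_Icc hθ)
  obtain ⟨Φ, hΦ, hlim⟩ :=
    exists_continuous_subconvergesOn_poincare hT.le ha hG.continuous hG.abs_le R
  have hψ : Continuous fun q : ℂ × ℂ => Complex.I * (q.2 - q.1) := by fun_prop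
  have hρ : ρ ∈ Icc ρ R := left_mem_Icc.2 hA.le
  obtain ⟨⟨r, θ⟩, ⟨hr, hθ⟩, w, hw, hfix⟩ :=
    (hlim.comp hκ (fun p hp => mem_closedBall_zero_iff.2 ((hnorm hp.1).trans_le hp.1.2))
      hψ).exists_zero_mem_of_rectangle hA.le hcd
    (fun n => (hψ.comp (hκ.prodMk ((hΦ n).comp hκ))).continuousOn)
    (fun r hr => turnedDisplacement_subset_im_neg hG hT ((hκre _ _).trans (by simp))
      ((hκim _ _).trans_lt (by simpa using hA.pos.trans_le hr.1)))
    (fun r hr => turnedDisplacement_subset_slitPlane_of_re_eq_zero hG hT ha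
      ((hκre _ _).trans (by simp))
      ((by simpa using hA.pos.trans_le hr.1 : 0 < r * Real.sin (Real.pi / 2)).trans_eq
        (hκim _ _).symm))
    (fun θ hθ => hA.turnedDisplacement_subset_slitPlane hG hT ha
      (hre (right_mem_Icc.2 hA.le) hθ) (hnorm (right_mem_Icc.2 hA.le)))
    (fun θ hθ => hA.neg_mem_slitPlane_of_mem_turnedDisplacement hG hT (hre hρ hθ) (hnorm hρ))
    (hA.turnedDisplacement_subset_im_pos ((hκre _ _).trans (by simp))
      ((by simpa using hA.pos : 0 < ρ * Real.sin (Real.pi / 2)).trans_eq (hκim _ _).symm)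
      (hnorm hρ))
  refine ⟨κ (r, θ), hre hr hθ, (hnorm hr).symm ▸ hA.pos.trans_le hr.1, ?_⟩
  rw [mul_eq_zero, or_iff_right Complex.I_ne_zero, sub_eq_zero] at hfix
  exact (show w = κ (r, θ) from hfix) ▸ hw

theorem posSolPeriodic (hA : ShootingAnnulus T a G ρ R) (hG : OneSidedNonlinearity G C)
    (hT : 0 < T) (ha : IntegrableOn a (Icc 0 T)) : PosSolPeriodic T a G := by
  obtain ⟨z, hz, hz0, u, v, h, rfl, hfix⟩ := hA.exists_mem_poincare_self hG hT ha
  have hu : u T = u 0 := congrArg Complex.re hfix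
  have hv : v T = v 0 := congrArg Complex.im hfix
  exact ⟨u, v, h.isSolOn, h.pos_of_periodic ha hG hT hz hz0 hu hv, hu.symm, hv.symm⟩

end ShootingAnnulus

section LinearGrowth

open Asymptotics

theorem exists_forall_abs_le_mul_abs {G : ℝ → ℝ} (hG : Continuous G) (hzero : G =O[nhds 0] id)
    (hinfty : G =O[cocompact ℝ] id) : ∃ C, ∀ s, |G s| ≤ C * |s| := by
  obtain ⟨c, hc⟩ := hzero.bound
  obtain ⟨d, hd⟩ := hinfty.bound
  obtain ⟨U, hU, hUo, hU0⟩ := eventually_nhds_iff.1 hc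
  obtain ⟨K, hK, hKc⟩ := mem_cocompact.1 hd
  have hcompact : G =O[𝓟 (K \ U)] id :=
    (hG.continuousOn.isBigO_principal (hK.diff hUo) (c := (1 : ℝ)) (by simp)).trans
      (continuousOn_id.isBigO_rev_principal (hK.diff hUo)
        (fun s hs (hs0 : s = 0) => hs.2 (hs0 ▸ hU0)) 1)
  obtain ⟨C, hC⟩ := (((isBigO_principal.2 ⟨c, hU⟩).sup hcompact).sup
    (isBigO_principal.2 ⟨d, hKc⟩)).bound
  refine ⟨C, fun s => ?_⟩
  simp only [sup_principal, eventually_principal] at hC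
  exact hC s (by by_cases s ∈ U <;> by_cases s ∈ K <;> simp [*])

theorem isBigO_atTop_of_growthLimsup_lt_top {g : ℝ → ℝ} (hg : ∀ s, 0 ≤ s → 0 ≤ g s)
    (hsup : GrowthLimsup g < ⊤) : g =O[atTop] id := by
  obtain ⟨c, hc, -⟩ := EReal.lt_iff_exists_real_btwn.1 hsup
  refine IsBigO.of_bound c ?_
  filter_upwards [eventually_lt_of_limsup_lt hc, eventually_gt_atTop 0] with s hs hs0
  rw [EReal.coe_lt_coe_iff, div_lt_iff₀ hs0] at hs
  rw [Real.norm_of_nonneg (hg s hs0.le), id, Real.norm_of_nonneg hs0.le]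
  exact hs.le

theorem exists_affine_le_of_lt_growthLiminf {g : ℝ → ℝ} {lam : ℝ} (hg : ∀ s, 0 ≤ s → 0 ≤ g s)
    (hlam : (lam : EReal) < GrowthLiminf g) :
    ∃ mu > lam, ∃ B, ∀ s, 0 ≤ s → mu * s - B ≤ g s := by
  obtain ⟨mu, hmu, hlt⟩ := EReal.lt_iff_exists_real_btwn.1 hlam
  obtain ⟨N, hN⟩ := eventually_atTop.1 (eventually_lt_of_lt_liminf hlt)
  refine ⟨mu, EReal.coe_lt_coe_iff.1 hmu, |mu| * |N|, fun s hs => ?_⟩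
  rcases lt_or_ge s N with hsN | hsN
  · have : mu * s ≤ |mu| * |N| := mul_le_mul (le_abs_self mu) (hsN.le.trans (le_abs_self N)) hs
      (abs_nonneg mu)
    linarith [hg s hs]
  · rcases hs.eq_or_lt with rfl | hs0
    · linarith [hg 0 le_rfl, mul_nonneg (abs_nonneg mu) (abs_nonneg N)]
    · have hlt := EReal.coe_lt_coe_iff.1 (hN s hsN)
      rw [lt_div_iff₀ hs0] at hlt
      linarith [mul_nonneg (abs_nonneg mu) (abs_nonneg N)]

end LinearGrowth

/-- The extension of `g : [0, ∞) → ℝ` with `g 0 = 0` to the real line by zero. -/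
def extendByZero (g : ℝ → ℝ) (s : ℝ) : ℝ :=
  g (max s 0)

section ExtendByZero

open Asymptotics

variable {g : ℝ → ℝ} {s : ℝ}

theorem extendByZero_of_nonneg (hs : 0 ≤ s) : extendByZero g s = g s := by
  rw [extendByZero, max_eq_left hs]

theorem extendByZero_of_nonpos (hg : g 0 = 0) (hs : s ≤ 0) : extendByZero g s = 0 := by
  rw [extendByZero, max_eq_right hs, hg]

theorem continuous_extendByZero (hg : ContinuousOn g (Ici 0)) : Continuous (extendByZero g) :=
  hg.comp_continuous (by fun_prop) fun s => le_max_right s 0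

theorem isLittleO_extendByZero (hg : g 0 = 0)
    (hlim : Tendsto (fun s => g s / s) (nhdsWithin 0 (Ioi 0)) (nhds 0)) :
    extendByZero g =o[nhds 0] fun s => s := by
  have hright : g =o[nhdsWithin 0 (Ioi 0)] fun s => s :=
    (isLittleO_iff_tendsto' (eventually_mem_nhdsWithin.mono fun s hs h0 =>
      absurd h0 (ne_of_gt hs))).2 hlim
  refine isLittleO_iff.2 fun c hc => ?_
  filter_upwards [eventually_nhdsWithin_iff.1 (hright.bound hc)] with s hs
  rcases le_or_gt s 0 with hs0 | hs0
  · rw [extendByZero_of_nonpos hg hs0, norm_zero]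
    positivity
  · rw [extendByZero_of_nonneg hs0.le]
    exact hs hs0

theorem extendByZero_isBigO_cocompact (hg : g 0 = 0) (htop : g =O[atTop] id) :
    extendByZero g =O[cocompact ℝ] id := by
  rw [cocompact_eq_atBot_atTop, isBigO_sup]
  constructor
  · exact (isBigO_zero id atBot).congr'
      ((eventually_le_atBot 0).mono fun s hs => (extendByZero_of_nonpos hg hs).symm) .rfl
  · exact htop.congr' ((eventually_ge_atTop 0).mono fun s hs => (extendByZero_of_nonneg hs).symm)
      .rfl

theorem RegOscAtZero.extendByZero (h : RegOscAtZero g) : RegOscAtZero (extendByZero g) := by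
  intro ε hε
  obtain ⟨δ, hδ, η, hη, hosc⟩ := h ε hε
  refine ⟨δ, hδ, min η 1, lt_min hη one_pos, fun s ω hs hsδ hω => ?_⟩
  have hω0 : 0 ≤ ω := by linarith [(abs_lt.1 (hω.trans_le (min_le_right _ _))).1]
  rw [extendByZero_of_nonneg (mul_nonneg hω0 hs.le), extendByZero_of_nonneg hs.le]
  exact hosc s ω hs hsδ (hω.trans_le (min_le_left _ _))

end ExtendByZero

theorem CondG1.exists_oneSidedNonlinearity_extendByZero {g : ℝ → ℝ} (hg1 : CondG1 g)
    (hg0 : Tendsto (fun s => g s / s) (nhdsWithin 0 (Ioi 0)) (nhds 0))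
    (hsup : GrowthLimsup g < ⊤) : ∃ C, OneSidedNonlinearity (extendByZero g) C := by
  obtain ⟨hcont, hnonneg, hzero, -⟩ := hg1
  obtain ⟨C, hC⟩ := exists_forall_abs_le_mul_abs (continuous_extendByZero hcont)
    (isLittleO_extendByZero hzero hg0).isBigO
    (extendByZero_isBigO_cocompact hzero (isBigO_atTop_of_growthLimsup_lt_top hnonneg hsup))
  exact ⟨C, continuous_extendByZero hcont, fun s => extendByZero_of_nonpos hzero, hC⟩

theorem exists_shootingAnnulus_extendByZero {T σ τ lam : ℝ} {a g : ℝ → ℝ} (hT : 0 < T)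
    (hg1 : CondG1 g) (hreg : RegOscAtZero g)
    (hg0 : Tendsto (fun s => g s / s) (nhdsWithin 0 (Ioi 0)) (nhds 0))
    (hsup : GrowthLimsup g < ⊤) (ha : IntegrableOn a (Icc 0 T)) (hmean : ∫ x in 0..T, a x < 0)
    (hσ : 0 ≤ σ) (hστ : σ < τ) (hτ : τ ≤ T)
    (ha0 : ∀ᵐ x ∂volume.restrict (Icc σ τ), 0 ≤ a x)
    (hlam : (lam : EReal) < GrowthLiminf g) (heig : DirichletEigenpair a σ τ lam) :
    ∃ ρ R, ShootingAnnulus T a (extendByZero g) ρ R := by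
  obtain ⟨C, hG⟩ := hg1.exists_oneSidedNonlinearity_extendByZero hg0 hsup
  obtain ⟨-, hnonneg, hzero, hpos⟩ := hg1
  have hlittle := isLittleO_extendByZero hzero hg0
  obtain ⟨ρ₁, hρ₁, hsmall_pos⟩ := exists_radius_pos_of_isLittleO hT ha hG.abs_le hlittle
  obtain ⟨ρ₂, hρ₂, hsmall_velocity⟩ := exists_radius_velocity_lt hT ha hmean hG.abs_le hlittle
    (fun s hs => (hpos s hs).trans_eq (extendByZero_of_nonneg hs.le).symm) hreg.extendByZero
  obtain ⟨mu, hmu, B, hB⟩ := exists_affine_le_of_lt_growthLiminf hnonneg hlam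
  obtain ⟨φ, φ', hφ⟩ := exists_positiveEigenfunction_of_dirichletEigenpair
    (ha.mono_set (Icc_subset_Icc hσ hτ)) heig
  obtain ⟨R, hlarge⟩ := hφ.exists_radius_exists_nonpos hστ hσ hτ ha ha0 hG.abs_le
    (fun s => hnonneg _ (le_max_right s 0)) hmu
    (fun s hs => (hB s hs).trans_eq (extendByZero_of_nonneg hs).symm)
  exact ⟨min ρ₁ ρ₂, max (min ρ₁ ρ₂) R,
    { pos := lt_min hρ₁ hρ₂
      le := le_max_left _ _
      pos_of_norm_le := fun u v h hz => hsmall_pos u v h (hz.trans (min_le_left _ _))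
      velocity_lt_of_norm_le := fun u v h hz => hsmall_velocity u v h (hz.trans (min_le_right _ _))
      exists_nonpos_of_le_norm := fun u v h hu0 hz =>
        hlarge u v h hu0 ((le_max_right _ _).trans hz) }⟩

theorem lt_of_not_ae_restrict_Icc {σ τ : ℝ} {p : ℝ → Prop} (hle : σ ≤ τ)
    (h : ¬ ∀ᵐ x ∂volume.restrict (Icc σ τ), p x) : σ < τ := by
  refine hle.lt_of_ne fun heq => h ?_
  simp [heq]

theorem statement_6_general {T σ τ lam : ℝ} {a g : ℝ → ℝ} (hT : 0 < T)
    (hg1 : CondG1 g) (hreg : RegOscAtZero g)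
    (hg0 : Tendsto (fun s => g s / s) (nhdsWithin 0 (Ioi 0)) (nhds 0))
    (hsup : GrowthLimsup g < ⊤) (ha : IntervalIntegrable a volume 0 T)
    (hmean : ∫ x in 0..T, a x < 0) (hσ : 0 ≤ σ) (hστ : σ < τ) (hτ : τ ≤ T)
    (ha0 : ∀ᵐ x ∂volume.restrict (Icc σ τ), 0 ≤ a x)
    (hlam : (lam : EReal) < GrowthLiminf g) (heig : DirichletEigenpair a σ τ lam) :
    PosSolNeumann T a g ∧ PosSolPeriodic T a g := by
  have ha : IntegrableOn a (Icc 0 T) := (intervalIntegrable_iff_integrableOn_Icc_of_le hT.le).1 ha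
  obtain ⟨C, hG⟩ := hg1.exists_oneSidedNonlinearity_extendByZero hg0 hsup
  obtain ⟨ρ, R, hA⟩ := exists_shootingAnnulus_extendByZero hT hg1 hreg hg0 hsup ha hmean hσ hστ hτ
    ha0 hlam heig
  have hext : EqOn (extendByZero g) g (Ioi 0) := fun s hs => extendByZero_of_nonneg (le_of_lt hs)
  exact ⟨(hA.posSolNeumann hG hT.le ha).congr hext, (hA.posSolPeriodic hG hT ha).congr hext⟩

/-- Corollary: under (g1), regular oscillation at zero, `g(s)/s → 0` as `s → 0⁺`,
`limsup_{s→+∞} g(s)/s < +∞`, (a1), (a2), and `g_∞ > λ₁ⁱ` for at least one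
interval of positivity `Iᵢ`, the equation `u'' + a(x) g(u) = 0` has a positive
Neumann solution and a positive periodic solution. -/
theorem statement_6
    (T : ℝ) (hT : 0 < T)
    (g : ℝ → ℝ) (hg1 : CondG1 g) (hreg : RegOscAtZero g)
    (hg0 : Tendsto (fun s => g s / s) (nhdsWithin 0 (Ioi 0)) (nhds 0))
    (hsup : GrowthLimsup g < ⊤)
    (a : ℝ → ℝ) (ha : IntervalIntegrable a volume 0 T)
    (m : ℕ) (hm : 0 < m) (σ τ : Fin m → ℝ)
    (hIT : ∀ i, 0 ≤ σ i ∧ σ i ≤ τ i ∧ τ i ≤ T)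
    (hdisj : Pairwise fun i j => Disjoint (Icc (σ i) (τ i)) (Icc (σ j) (τ j)))
    (hapos : ∀ i, ∀ᵐ x ∂(volume.restrict (Icc (σ i) (τ i))), 0 ≤ a x)
    (hane0 : ∀ i, ¬ (∀ᵐ x ∂(volume.restrict (Icc (σ i) (τ i))), a x = 0))
    (haneg : ∀ᵐ x ∂(volume.restrict (Icc (0:ℝ) T \ ⋃ i, Icc (σ i) (τ i))), a x ≤ 0)
    (ha2 : (∫ x in (0:ℝ)..T, a x) < 0)
    (heig : ∃ i, ∃ lam : ℝ, 0 < lam ∧ (lam : EReal) < GrowthLiminf g ∧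
      DirichletEigenpair a (σ i) (τ i) lam) :
    PosSolNeumann T a g ∧ PosSolPeriodic T a g := by
  obtain ⟨i, lam, -, hlam, heig⟩ := heig
  obtain ⟨hσ, hστ, hτ⟩ := hIT i
  exact statement_6_general hT hg1 hreg hg0 hsup ha ha2 hσ
    (lt_of_not_ae_restrict_Icc hστ (hane0 i)) hτ (hapos i) hlam heig
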